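/- arXiv:2406.06926 — 2 statements merged into one kernel-verified Lean document; each statement's English description precedes it below -/
import Mathlib

section
/- Let d ≥ 2, 0 < s ≤ 1, 1 < γ < ∞, 1 ≤ p, q < ∞, 1 < α < d, and 0 < β₁, β₂ < ∞ be such that β₁p + 2β₂q = 1 and (d − sp)β₁ + (d + α)β₂ = d/γ, and 𝒟 = p(d+α) − 2q(d−sp) ≠ 0. Assume that either β₁γ + ((d+α−2)/(d−1)) β₂γ < 1, or (β₁γ + ((d+α−2)/(d−1)) β₂γ = 1 and q(1−sp) ≠ p). Then there is NO constant C > 0 such that ‖g‖_{L^γ(ℝ^d)} ≤ C ‖g‖_{Ẇ^{s,p}(ℝ^d)}^{β₁p} ( ∫_{ℝ^d}∫_{ℝ^d} |g(x)|^q |g(y)|^q / |x−y|^{d−α} dx dy )^{β₂} holds for all radial g ∈ C¹_{c,rad}(ℝ^d). -/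
open MeasureTheory Real

/-- Homogeneous (fractional) Sobolev seminorm `‖g‖_{Ẇ^{s,p}(ℝ^d)}`:
for `0 < s < 1` the Gagliardo seminorm, for `s = 1` the `L^p` norm of the gradient. -/
noncomputable def sobolevSemi (d : ℕ) (s p : ℝ) (g : EuclideanSpace ℝ (Fin d) → ℝ) : ℝ :=
  if s = 1 then (∫ x, ‖fderiv ℝ g x‖ ^ p) ^ (1 / p)
  else if s = 0 then (∫ x, |g x| ^ p) ^ (1 / p)
  else (∫ x, ∫ y, |g x - g y| ^ p / ‖x - y‖ ^ ((d : ℝ) + s * p)) ^ (1 / p)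

/-- The Coulomb energy `∫∫ |g x|^q |g y|^q / |x-y|^{d-α} dx dy`. -/
noncomputable def coulombEnergy (d : ℕ) (q α : ℝ) (g : EuclideanSpace ℝ (Fin d) → ℝ) : ℝ :=
  ∫ x, ∫ y, |g x| ^ q * |g y| ^ q / ‖x - y‖ ^ ((d : ℝ) - α)

lemma setLIntegral_ball_inv_enorm_rpow_lt_top {E : Type*} [NormedAddCommGroup E]
    [NormedSpace ℝ E] [FiniteDimensional ℝ E] [Nontrivial E] [MeasurableSpace E] [BorelSpace E]
    (μ : Measure E) [μ.IsAddHaarMeasure] {a : ℝ} (ha : a < Module.finrank ℝ E) (r : ℝ) :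
    ∫⁻ z in Metric.ball (0 : E) r, (‖z‖ₑ ^ a)⁻¹ ∂μ < ⊤ := by
  have hint : IntegrableOn (fun z : E => ‖z‖ ^ (-a)) (Metric.ball (0 : E) r) μ := by
    rw [integrableOn_fun_norm_addHaar μ (f := fun t : ℝ => t ^ (-a))]
    rcases le_or_gt r 0 with hr | hr
    · simp [Set.Ioo_eq_empty (not_lt.2 hr)]
    have h1 : 1 ≤ Module.finrank ℝ E := Module.finrank_pos
    have := (intervalIntegral.integrableOn_Ioo_rpow_iff
      (s := (Module.finrank ℝ E : ℝ) - 1 - a) hr).2 (by linarith)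
    refine this.congr_fun (fun y hy => ?_) measurableSet_Ioo
    simp only [smul_eq_mul]
    rw [← Real.rpow_natCast, ← Real.rpow_add hy.1]
    congr 1
    push_cast [h1]
    ring
  have hfin := hint.2
  refine lt_of_le_of_lt (lintegral_mono_ae ?_) hfin
  have hne : ∀ᵐ z ∂(μ.restrict (Metric.ball (0 : E) r)), z ≠ 0 :=
    ae_restrict_of_ae (Measure.ae_ne μ 0)
  filter_upwards [hne] with z hz
  have hz' : 0 < ‖z‖ := norm_pos_iff.2 hz
  rw [← ofReal_norm, ← ofReal_norm, Real.norm_of_nonneg (by positivity),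
    ENNReal.ofReal_rpow_of_pos hz', ← ENNReal.ofReal_inv_of_pos (by positivity),
    Real.rpow_neg hz'.le]

lemma lintegral_min_one_norm_rpow_div_lt_top {E : Type*} [NormedAddCommGroup E]
    [NormedSpace ℝ E] [FiniteDimensional ℝ E] [Nontrivial E] [MeasurableSpace E] [BorelSpace E]
    (μ : Measure E) [μ.IsAddHaarMeasure] {s p : ℝ} (hs0 : 0 < s) (hs1 : s < 1) (hp : 0 < p) :
    ∫⁻ z : E, ENNReal.ofReal (min 1 ‖z‖ ^ p / ‖z‖ ^ (Module.finrank ℝ E + s * p)) ∂μ < ⊤ := by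
  have hint : Integrable (fun z : E => min 1 ‖z‖ ^ p / ‖z‖ ^ (Module.finrank ℝ E + s * p)) μ := by
    rw [integrable_fun_norm_addHaar μ
      (f := fun t : ℝ => min 1 t ^ p / t ^ (Module.finrank ℝ E + s * p))]
    have h1 : 1 ≤ Module.finrank ℝ E := Module.finrank_pos
    have hpow (y : ℝ) (hy : 0 < y) : y ^ (Module.finrank ℝ E - 1) =
        y ^ ((Module.finrank ℝ E : ℝ) - 1) := by
      rw [← Real.rpow_natCast]; push_cast [h1]; rfl
    have e1 : IntegrableOn (fun y : ℝ => y ^ (Module.finrank ℝ E - 1) •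
        (min 1 y ^ p / y ^ (Module.finrank ℝ E + s * p))) (Set.Ioo 0 1) := by
      have := (intervalIntegral.integrableOn_Ioo_rpow_iff (s := p * (1 - s) - 1) one_pos).2
        (by nlinarith)
      refine this.congr_fun (fun y hy => ?_) measurableSet_Ioo
      simp only [smul_eq_mul]
      rw [min_eq_right hy.2.le, hpow y hy.1, ← Real.rpow_sub hy.1, ← Real.rpow_add hy.1]
      congr 1
      ring
    have e2 : IntegrableOn (fun y : ℝ => y ^ (Module.finrank ℝ E - 1) •
        (min 1 y ^ p / y ^ (Module.finrank ℝ E + s * p))) (Set.Ici 1) := by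
      rw [integrableOn_Ici_iff_integrableOn_Ioi]
      have := integrableOn_Ioi_rpow_of_lt (a := -1 - s * p) (by nlinarith [mul_pos hs0 hp]) one_pos
      refine this.congr_fun (fun y hy => ?_) measurableSet_Ioi
      have hy0 : (0 : ℝ) < y := one_pos.trans hy
      simp only [smul_eq_mul]
      rw [min_eq_left (le_of_lt hy), hpow y hy0, Real.one_rpow, one_div, ← Real.rpow_neg hy0.le,
        ← Real.rpow_add hy0]
      congr 1
      ring
    rw [← Set.Ioo_union_Ici_eq_Ioi one_pos]
    exact e1.union e2
  refine lt_of_le_of_lt (lintegral_mono fun z => ?_) hint.2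
  rw [← ofReal_norm, Real.norm_of_nonneg (by positivity)]

lemma lintegral_comp_smul_of_pos {E : Type*} [NormedAddCommGroup E]
    [NormedSpace ℝ E] [FiniteDimensional ℝ E] [MeasurableSpace E] [BorelSpace E]
    (μ : Measure E) [μ.IsAddHaarMeasure] {c : ℝ} (hc : 0 < c) (f : E → ENNReal) :
    ∫⁻ x, f (c • x) ∂μ = ENNReal.ofReal ((c ^ Module.finrank ℝ E)⁻¹) * ∫⁻ x, f x ∂μ := by
  have h := lintegral_map_equiv (μ := μ) f (MeasurableEquiv.smul₀ c hc.ne')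
  simp only [MeasurableEquiv.coe_smul₀] at h
  rw [← h, Measure.map_addHaar_smul μ hc.ne', lintegral_smul_measure, abs_of_pos (by positivity)]
  rfl

/-- The spherical shell of radius `R` and relative squared width `ε`. -/
def shellSet (d : ℕ) (R ε : ℝ) : Set (EuclideanSpace ℝ (Fin d)) :=
  {x | |‖x‖ ^ 2 / R ^ 2 - 1| ≤ ε}

lemma isClosed_shellSet (d : ℕ) (R ε : ℝ) : IsClosed (shellSet d R ε) :=
  isClosed_le (by fun_prop) continuous_const

lemma measurableSet_shellSet (d : ℕ) (R ε : ℝ) : MeasurableSet (shellSet d R ε) :=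
  (isClosed_shellSet d R ε).measurableSet

lemma volume_sq_near_le {c b ε : ℝ} (hb : 0 < b) :
    volume {t : ℝ | |t ^ 2 + c - 1| ≤ ε ∧ b ≤ |t|} ≤ ENNReal.ofReal (2 / b * ε) := by
  rcases lt_or_ge ε 0 with hε | hε
  · have : {t : ℝ | |t ^ 2 + c - 1| ≤ ε ∧ b ≤ |t|} = ∅ := by
      ext t
      simp only [Set.mem_ofPred_eq, Set.mem_empty_iff_false, iff_false, not_and]
      intro h
      linarith [abs_nonneg (t ^ 2 + c - 1)]
    simp [this]
  have hsub : {t : ℝ | |t ^ 2 + c - 1| ≤ ε ∧ b ≤ |t|} ⊆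
      {t : ℝ | |t ^ 2 + c - 1| ≤ ε ∧ b ≤ t} ∪ {t : ℝ | |t ^ 2 + c - 1| ≤ ε ∧ b ≤ -t} := by
    rintro t ⟨h1, h2⟩
    rcases le_abs.1 h2 with h | h
    · exact Or.inl ⟨h1, h⟩
    · exact Or.inr ⟨h1, h⟩
  have key (u v : ℝ) (hu : |u ^ 2 + c - 1| ≤ ε) (hub : b ≤ u) (hv : |v ^ 2 + c - 1| ≤ ε)
      (hvb : b ≤ v) : |u - v| ≤ 1 / b * ε := by
    rw [abs_le] at hu hv
    have h1 : |u - v| * (2 * b) ≤ 2 * ε := by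
      calc |u - v| * (2 * b) ≤ |u - v| * |u + v| := by
            gcongr
            exact (by linarith : 2 * b ≤ u + v).trans (le_abs_self _)
        _ = |u ^ 2 - v ^ 2| := by rw [← abs_mul]; congr 1; ring
        _ ≤ 2 * ε := by rw [abs_le]; constructor <;> linarith
    rw [one_div, inv_mul_eq_div, le_div_iff₀ hb]
    linarith
  have hpos : volume {t : ℝ | |t ^ 2 + c - 1| ≤ ε ∧ b ≤ t} ≤ ENNReal.ofReal (1 / b * ε) := by
    refine (Real.volume_le_diam _).trans (Metric.ediam_le fun u hu v hv => ?_)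
    rw [edist_dist, Real.dist_eq]
    exact ENNReal.ofReal_le_ofReal (key u v hu.1 hu.2 hv.1 hv.2)
  have hneg : volume {t : ℝ | |t ^ 2 + c - 1| ≤ ε ∧ b ≤ -t} ≤ ENNReal.ofReal (1 / b * ε) := by
    refine (Real.volume_le_diam _).trans (Metric.ediam_le fun u hu v hv => ?_)
    rw [edist_dist, Real.dist_eq]
    refine ENNReal.ofReal_le_ofReal ?_
    have := key (-u) (-v) (by simpa using hu.1) hu.2 (by simpa using hv.1) hv.2
    rwa [neg_sub_neg, abs_sub_comm] at this
  refine (measure_mono hsub).trans ((measure_union_le _ _).trans ((add_le_add hpos hneg).trans ?_))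
  rw [← ENNReal.ofReal_add (by positivity) (by positivity)]
  exact ENNReal.ofReal_le_ofReal (by ring_nf; rfl)

/-- The Euclidean space split into its `i`-th coordinate and the others. -/
lemma measurePreserving_coord_succAbove (n : ℕ) (i : Fin (n + 1)) :
    MeasurePreserving (fun y : EuclideanSpace ℝ (Fin (n + 1)) => (y i, fun j => y (i.succAbove j)))
      volume ((volume : Measure ℝ).prod (volume : Measure (Fin n → ℝ))) :=
  (volume_preserving_piFinSuccAbove (fun _ : Fin (n + 1) => ℝ) i).comp
    (PiLp.volume_preserving_ofLp (Fin (n + 1)))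

lemma exists_setLIntegral_shellSet_le (n : ℕ) {a : ℝ} (ha0 : 0 ≤ a) (ha : a < n) :
    ∃ C : ENNReal, C ≠ ⊤ ∧ ∀ ε ≤ (1 / 2 : ℝ), ∀ x : EuclideanSpace ℝ (Fin (n + 1)), ‖x‖ ≤ 2 →
      ∫⁻ y in shellSet (n + 1) 1 ε, (‖x - y‖ₑ ^ a)⁻¹ ≤ C * ENNReal.ofReal ε := by
  have hn : 0 < n := by
    have : (0 : ℝ) < n := ha0.trans_lt ha
    exact_mod_cast this
  have : Nonempty (Fin n) := ⟨⟨0, hn⟩⟩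
  set K : (Fin n → ℝ) → ENNReal := fun w => (‖w‖ₑ ^ a)⁻¹ with hK
  have hKm : Measurable K := by fun_prop
  set D : ENNReal := ∫⁻ w in Metric.ball (0 : Fin n → ℝ) 5, K w with hDdef
  have hD : D < ⊤ := setLIntegral_ball_inv_enorm_rpow_lt_top volume (by simpa using ha) 5
  set b : ℝ := 1 / (2 * (n + 1)) with hb
  have hbpos : 0 < b := by positivity
  refine ⟨(n + 1 : ℕ) * (ENNReal.ofReal (2 / b) * D), by finiteness, ?_⟩
  intro ε hε x hx
  set Q : Set (ℝ × (Fin n → ℝ)) :=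
    {v | |v.1 ^ 2 + (∑ j, v.2 j ^ 2) - 1| ≤ ε ∧ b ≤ |v.1|} with hQ
  have hQm : MeasurableSet Q := by
    have h1 : IsClosed {v : ℝ × (Fin n → ℝ) | |v.1 ^ 2 + (∑ j, v.2 j ^ 2) - 1| ≤ ε} :=
      isClosed_le (by fun_prop) continuous_const
    have h2 : IsClosed {v : ℝ × (Fin n → ℝ) | b ≤ |v.1|} :=
      isClosed_le continuous_const (by fun_prop)
    exact (h1.inter h2).measurableSet
  set F : Fin (n + 1) → ℝ × (Fin n → ℝ) → ENNReal := fun i v =>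
    (Metric.ball (0 : Fin n → ℝ) 5).indicator K ((fun j => x (i.succAbove j)) - v.2) *
      Q.indicator 1 v with hF
  have hFm (i) : Measurable (F i) :=
    ((hKm.indicator Metric.isOpen_ball.measurableSet).comp (by fun_prop)).mul
      (measurable_one.indicator hQm)
  have hFint (i) : ∫⁻ y : EuclideanSpace ℝ (Fin (n + 1)), F i (y i, fun j => y (i.succAbove j)) ≤
      ENNReal.ofReal (2 / b) * D * ENNReal.ofReal ε := by
    rw [(measurePreserving_coord_succAbove n i).lintegral_comp (hFm i),
      lintegral_prod_symm _ (hFm i).aemeasurable]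
    calc ∫⁻ z, ∫⁻ t, F i (t, z) ≤ ∫⁻ z : Fin n → ℝ, (Metric.ball (0 : Fin n → ℝ) 5).indicator K
            ((fun j => x (i.succAbove j)) - z) * ENNReal.ofReal (2 / b * ε) := by
          refine lintegral_mono fun z => ?_
          simp only [hF]
          have hm : Measurable fun t : ℝ => Q.indicator (1 : ℝ × (Fin n → ℝ) → ENNReal) (t, z) :=
            (measurable_one.indicator hQm).comp (by fun_prop)
          rw [lintegral_const_mul _ hm]
          gcongr
          refine le_trans (le_of_eq ?_) (volume_sq_near_le (c := ∑ j, z j ^ 2) hbpos)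
          rw [← lintegral_indicator_one]
          · rfl
          · exact (measurable_prodMk_right (y := z)) hQm
      _ = ENNReal.ofReal (2 / b) * D * ENNReal.ofReal ε := by
          rw [lintegral_mul_const' _ _ (by finiteness),
            lintegral_sub_left_eq_self ((Metric.ball (0 : Fin n → ℝ) 5).indicator K),
            lintegral_indicator Metric.isOpen_ball.measurableSet,
            ENNReal.ofReal_mul (by positivity)]
          ring
  calc ∫⁻ y in shellSet (n + 1) 1 ε, (‖x - y‖ₑ ^ a)⁻¹
      ≤ ∫⁻ y : EuclideanSpace ℝ (Fin (n + 1)),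
          ∑ i, F i (y i, fun j => y (i.succAbove j)) := by
        rw [← lintegral_indicator (measurableSet_shellSet _ _ _)]
        refine lintegral_mono fun y => ?_
        by_cases hy : y ∈ shellSet (n + 1) 1 ε
        swap
        · simp [hy]
        rw [Set.indicator_of_mem hy]
        have hy' : |‖y‖ ^ 2 - 1| ≤ ε := by simpa [shellSet] using hy
        have hy2 := abs_le.1 (hy'.trans hε)
        obtain ⟨i, hi⟩ : ∃ i, ‖y‖ ^ 2 / (n + 1) ≤ y i ^ 2 := by
          by_contra! h
          have := Finset.sum_lt_sum_of_nonempty (Finset.univ_nonempty (α := Fin (n + 1)))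
            (fun i _ => h i)
          rw [← EuclideanSpace.real_norm_sq_eq] at this
          simp only [Finset.sum_const, Finset.card_univ, Fintype.card_fin, nsmul_eq_mul] at this
          push_cast at this
          rw [mul_div_cancel₀ _ (by positivity)] at this
          exact lt_irrefl _ this
        refine le_trans ?_ (Finset.single_le_sum
          (f := fun i => F i (y i, fun j => y (i.succAbove j)))
          (fun _ _ => zero_le) (Finset.mem_univ i))
        have hle : ‖(fun j => x (i.succAbove j)) - (fun j => y (i.succAbove j))‖ ≤ ‖x - y‖ := by
          rw [pi_norm_le_iff_of_nonneg (norm_nonneg _)]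
          intro j
          exact PiLp.norm_apply_le (x - y) (i.succAbove j)
        have hyn : ‖y‖ ≤ 2 := by nlinarith [norm_nonneg y]
        have hball : (fun j => x (i.succAbove j)) - (fun j => y (i.succAbove j)) ∈
            Metric.ball (0 : Fin n → ℝ) 5 := by
          rw [mem_ball_zero_iff]
          linarith [norm_sub_le x y]
        have hmem : ((y i, fun j => y (i.succAbove j)) : ℝ × (Fin n → ℝ)) ∈ Q := by
          refine ⟨?_, ?_⟩
          · rw [EuclideanSpace.real_norm_sq_eq, Fin.sum_univ_succAbove _ i] at hy'
            exact hy'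
          · refine abs_le_of_sq_le_sq' ?_ (abs_nonneg _) |>.2
            rw [sq_abs]
            refine le_trans ?_ hi
            rw [hb, div_pow, div_le_div_iff₀ (by positivity) (by positivity)]
            have : (1 : ℝ) ≤ n := by exact_mod_cast hn
            nlinarith
        simp only [hF, Set.indicator_of_mem hball, Set.indicator_of_mem hmem, Pi.one_apply, mul_one,
          hK]
        rw [ENNReal.inv_le_inv]
        refine ENNReal.rpow_le_rpow ?_ ha0
        rw [← ofReal_norm, ← ofReal_norm]
        exact ENNReal.ofReal_le_ofReal hle
    _ ≤ ∑ i : Fin (n + 1), ENNReal.ofReal (2 / b) * D * ENNReal.ofReal ε := by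
        have hm (i) : Measurable fun y : EuclideanSpace ℝ (Fin (n + 1)) =>
            F i (y i, fun j => y (i.succAbove j)) :=
          (hFm i).comp (measurePreserving_coord_succAbove n i).measurable
        rw [lintegral_finsetSum _ fun i _ => hm i]
        exact Finset.sum_le_sum fun i _ => hFint i
    _ = _ := by
        rw [Finset.sum_const, Finset.card_univ, Fintype.card_fin, nsmul_eq_mul]
        ring

lemma mem_shellSet_smul {d : ℕ} {R ε : ℝ} (hR : 0 < R) (u : EuclideanSpace ℝ (Fin d)) :
    R • u ∈ shellSet d R ε ↔ u ∈ shellSet d 1 ε := by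
  change |‖R • u‖ ^ 2 / R ^ 2 - 1| ≤ ε ↔ |‖u‖ ^ 2 / 1 ^ 2 - 1| ≤ ε
  rw [norm_smul, Real.norm_of_nonneg hR.le, mul_pow, mul_div_cancel_left₀ _ (by positivity),
    one_pow, div_one]

lemma exists_setLIntegral_shellSet_le_of_pos {d : ℕ} (hd : 2 ≤ d) {α : ℝ} (hα1 : 1 < α)
    (hαd : α ≤ d) :
    ∃ C : ENNReal, C ≠ ⊤ ∧ ∀ R > 0, ∀ ε ≤ (1 / 2 : ℝ), ∀ x : EuclideanSpace ℝ (Fin d),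
      ‖x‖ ≤ 2 * R → ∫⁻ y in shellSet d R ε, (‖x - y‖ₑ ^ ((d : ℝ) - α))⁻¹ ≤
        C * ENNReal.ofReal (R ^ α * ε) := by
  obtain ⟨n, rfl⟩ : ∃ n, d = n + 1 := ⟨d - 1, by omega⟩
  obtain ⟨C, hC, h⟩ := exists_setLIntegral_shellSet_le n (a := ((n + 1 : ℕ) : ℝ) - α)
    (by linarith) (by push_cast; linarith)
  refine ⟨C, hC, fun R hR ε hε x hx => ?_⟩
  set a : ℝ := ((n + 1 : ℕ) : ℝ) - α with ha
  set f : EuclideanSpace ℝ (Fin (n + 1)) → ENNReal :=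
    (shellSet (n + 1) R ε).indicator fun y => (‖x - y‖ₑ ^ a)⁻¹ with hf
  have hx' : ‖R⁻¹ • x‖ ≤ 2 := by
    rw [norm_smul, Real.norm_of_nonneg (by positivity), inv_mul_le_iff₀ hR]
    linarith
  have hscale : ∀ u, f (R • u) = ENNReal.ofReal (R ^ (-a)) *
      (shellSet (n + 1) 1 ε).indicator (fun y => (‖R⁻¹ • x - y‖ₑ ^ a)⁻¹) u := by
    intro u
    by_cases hu : u ∈ shellSet (n + 1) 1 ε
    · rw [hf, Set.indicator_of_mem ((mem_shellSet_smul hR u).2 hu), Set.indicator_of_mem hu]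
      have : x - R • u = R • (R⁻¹ • x - u) := by
        rw [smul_sub, smul_smul, mul_inv_cancel₀ hR.ne', one_smul]
      rw [this, enorm_smul, ENNReal.mul_rpow_of_nonneg _ _ (by linarith : 0 ≤ a),
        Real.enorm_of_nonneg hR.le, ENNReal.ofReal_rpow_of_pos hR,
        ENNReal.mul_inv (Or.inl (by simp; positivity)) (Or.inl ENNReal.ofReal_ne_top),
        ← ENNReal.ofReal_inv_of_pos (by positivity), ← Real.rpow_neg hR.le]
    · rw [hf, Set.indicator_of_notMem ((mem_shellSet_smul hR u).not.2 hu),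
        Set.indicator_of_notMem hu, mul_zero]
  have hsm := lintegral_comp_smul_of_pos (volume : Measure (EuclideanSpace ℝ (Fin (n + 1)))) hR f
  rw [finrank_euclideanSpace_fin] at hsm
  rw [← lintegral_indicator (measurableSet_shellSet _ _ _)]
  have hint : ∫⁻ y, f y = ENNReal.ofReal (R ^ (n + 1)) * ∫⁻ u, f (R • u) := by
    rw [hsm, ← mul_assoc, ← ENNReal.ofReal_mul (by positivity), mul_inv_cancel₀ (by positivity),
      ENNReal.ofReal_one, one_mul]
  rw [hint, lintegral_congr hscale, lintegral_const_mul' _ _ ENNReal.ofReal_ne_top,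
    lintegral_indicator (measurableSet_shellSet _ _ _)]
  calc ENNReal.ofReal (R ^ (n + 1)) * (ENNReal.ofReal (R ^ (-a)) *
        ∫⁻ y in shellSet (n + 1) 1 ε, (‖R⁻¹ • x - y‖ₑ ^ a)⁻¹)
      ≤ ENNReal.ofReal (R ^ (n + 1)) * (ENNReal.ofReal (R ^ (-a)) * (C * ENNReal.ofReal ε)) := by
        gcongr
        exact h ε hε _ hx'
    _ = C * ENNReal.ofReal (R ^ α * ε) := by
        rw [ENNReal.ofReal_mul (by positivity)]
        have : R ^ α = R ^ (n + 1) * R ^ (-a) := by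
          rw [← Real.rpow_natCast, ← Real.rpow_add hR]
          congr 1
          rw [ha]; ring
        rw [this, ENNReal.ofReal_mul (by positivity)]
        ring

lemma exists_volume_shellSet_le {d : ℕ} (hd : 2 ≤ d) :
    ∃ C : ENNReal, C ≠ ⊤ ∧ ∀ R > 0, ∀ ε ≤ (1 / 2 : ℝ),
      volume (shellSet d R ε) ≤ C * ENNReal.ofReal (R ^ d * ε) := by
  obtain ⟨C, hC, h⟩ := exists_setLIntegral_shellSet_le_of_pos hd (α := d)
    (by exact_mod_cast hd) le_rfl
  refine ⟨C, hC, fun R hR ε hε => ?_⟩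
  have := h R hR ε hε 0 (by simp; positivity)
  simpa using this

lemma norm_le_of_mem_shellSet {d : ℕ} {R ε : ℝ} (hR : 0 < R) (hε : ε ≤ 1 / 2)
    {x : EuclideanSpace ℝ (Fin d)} (hx : x ∈ shellSet d R ε) : ‖x‖ ≤ 5 / 4 * R := by
  have hx' : |‖x‖ ^ 2 / R ^ 2 - 1| ≤ ε := hx
  have h1 : ‖x‖ ^ 2 / R ^ 2 ≤ 3 / 2 := by linarith [(abs_le.1 hx').2]
  rw [div_le_iff₀ (by positivity)] at h1
  nlinarith [norm_nonneg x]

lemma le_norm_of_mem_shellSet {d : ℕ} {R ε : ℝ} (hR : 0 < R) (hε : ε ≤ 1 / 2)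
    {x : EuclideanSpace ℝ (Fin d)} (hx : x ∈ shellSet d R ε) : 2 / 3 * R ≤ ‖x‖ := by
  have hx' : |‖x‖ ^ 2 / R ^ 2 - 1| ≤ ε := hx
  have h1 : 1 / 2 ≤ ‖x‖ ^ 2 / R ^ 2 := by linarith [(abs_le.1 hx').1]
  rw [le_div_iff₀ (by positivity)] at h1
  nlinarith [norm_nonneg x]

lemma volume_shellSet_lt_top {d : ℕ} {R ε : ℝ} (hR : 0 < R) (hε : ε ≤ 1 / 2) :
    volume (shellSet d R ε) < ⊤ := by
  refine lt_of_le_of_lt (measure_mono (t := Metric.closedBall 0 (5 / 4 * R)) fun x hx => ?_)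
    (isCompact_closedBall (0 : EuclideanSpace ℝ (Fin d)) _).measure_lt_top
  rw [mem_closedBall_zero_iff]
  exact norm_le_of_mem_shellSet hR hε hx

lemma exists_le_volume_shellSet {d : ℕ} (hd : 2 ≤ d) :
    ∃ c > (0 : ℝ), ∀ R > 0, ∀ ε > 0, ε ≤ (1 / 2 : ℝ) →
      c * (R ^ d * ε) ≤ volume.real (shellSet d R ε) := by
  have : Nonempty (Fin d) := ⟨⟨0, by omega⟩⟩
  set ω : ℝ := volume.real (Metric.ball (0 : EuclideanSpace ℝ (Fin d)) 1) with hω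
  have hωpos : 0 < ω := ENNReal.toReal_pos (Metric.measure_ball_pos _ _ one_pos).ne'
    measure_ball_lt_top.ne
  refine ⟨ω / 3, by positivity, fun R hR ε hε hε2 => ?_⟩
  have hball (r : ℝ) (hr : 0 ≤ r) :
      volume.real (Metric.ball (0 : EuclideanSpace ℝ (Fin d)) r) = r ^ d * ω := by
    rw [Measure.real, Measure.addHaar_ball _ _ hr, ENNReal.toReal_mul,
      ENNReal.toReal_ofReal (by positivity), finrank_euclideanSpace_fin, hω, Measure.real]
  have hsub : Metric.ball (0 : EuclideanSpace ℝ (Fin d)) (R * (1 + ε / 3)) \ Metric.ball 0 R ⊆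
      shellSet d R ε := by
    rintro x ⟨hx1, hx2⟩
    rw [mem_ball_zero_iff] at hx1 hx2
    rw [not_lt] at hx2
    have h1 : 1 ≤ ‖x‖ / R := by rwa [le_div_iff₀ hR, one_mul]
    have h2 : ‖x‖ / R ≤ 1 + ε / 3 := by rw [div_le_iff₀ hR]; linarith
    change |‖x‖ ^ 2 / R ^ 2 - 1| ≤ ε
    rw [← div_pow, abs_le]
    constructor <;> nlinarith
  calc ω / 3 * (R ^ d * ε) ≤ (R * (1 + ε / 3)) ^ d * ω - R ^ d * ω := by
        have hb := one_add_mul_le_pow (a := ε / 3) (by linarith) d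
        have hd' : (1 : ℝ) ≤ d := by exact_mod_cast (by omega : 1 ≤ d)
        have h3 : ε / 3 ≤ (1 + ε / 3) ^ d - 1 := by nlinarith
        have := mul_le_mul_of_nonneg_left h3 (by positivity : 0 ≤ R ^ d * ω)
        rw [mul_pow]
        linarith
    _ = volume.real (Metric.ball (0 : EuclideanSpace ℝ (Fin d)) (R * (1 + ε / 3)) \
          Metric.ball 0 R) := by
        rw [measureReal_sdiff (Metric.ball_subset_ball (by nlinarith))
          Metric.isOpen_ball.measurableSet, hball _ (by positivity), hball _ hR.le]
    _ ≤ volume.real (shellSet d R ε) := measureReal_mono hsub (volume_shellSet_lt_top hR hε2).ne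

lemma disjoint_shellSet {d : ℕ} {R R' ε ε' : ℝ} (hR : 0 < R) (hR' : 0 < R') (hε : ε ≤ 1 / 2)
    (hε' : ε' ≤ 1 / 2) (h : 4 * R ≤ R' ∨ 4 * R' ≤ R) :
    Disjoint (shellSet d R ε) (shellSet d R' ε') := by
  rw [Set.disjoint_left]
  intro x hx hx'
  have := norm_le_of_mem_shellSet hR hε hx
  have := norm_le_of_mem_shellSet hR' hε' hx'
  have := le_norm_of_mem_shellSet hR hε hx
  have := le_norm_of_mem_shellSet hR' hε' hx'
  rcases h with h | h <;> linarith

lemma setLIntegral_setLIntegral_shellSet_le {d : ℕ} (hd : 2 ≤ d) {α : ℝ} (hα1 : 1 < α)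
    (hαd : α ≤ d) :
    ∃ C : ENNReal, C ≠ ⊤ ∧ ∀ R > 0, ∀ R' > 0, ∀ ε > 0, ∀ ε' > 0, ε ≤ (1 / 2 : ℝ) →
      ε' ≤ (1 / 2 : ℝ) → (R = R' ∨ 4 * R ≤ R' ∨ 4 * R' ≤ R) →
      ∫⁻ x in shellSet d R ε, ∫⁻ y in shellSet d R' ε', (‖x - y‖ₑ ^ ((d : ℝ) - α))⁻¹ ≤
        C * ENNReal.ofReal ((R ^ d * ε) * (R' ^ d * ε') * (max R R') ^ (α - d)) := by
  obtain ⟨C, hC, h⟩ := exists_setLIntegral_shellSet_le_of_pos hd hα1 hαd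
  obtain ⟨V, hV, hvol⟩ := exists_volume_shellSet_le hd
  have hc4 : (0 : ℝ) < (1 / 4) ^ (α - d) := by positivity
  refine ⟨V * C + V * V * ENNReal.ofReal ((1 / 4) ^ (α - d)), by finiteness, ?_⟩
  intro R hR R' hR' ε hε0 ε' hε0' hε hε' hRR
  by_cases heq : R = R'
  · subst heq
    calc ∫⁻ x in shellSet d R ε, ∫⁻ y in shellSet d R ε', (‖x - y‖ₑ ^ ((d : ℝ) - α))⁻¹
        ≤ ∫⁻ x in shellSet d R ε, C * ENNReal.ofReal (R ^ α * ε') := by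
          refine setLIntegral_mono measurable_const fun x hx => h R hR ε' hε' x ?_
          linarith [norm_le_of_mem_shellSet hR hε hx]
      _ = C * ENNReal.ofReal (R ^ α * ε') * volume (shellSet d R ε) := by
          rw [lintegral_const, Measure.restrict_apply_univ]
      _ ≤ C * ENNReal.ofReal (R ^ α * ε') * (V * ENNReal.ofReal (R ^ d * ε)) := by
          gcongr
          exact hvol R hR ε hε
      _ = V * C * ENNReal.ofReal ((R ^ d * ε) * (R ^ d * ε') * (max R R) ^ (α - d)) := by
          have : (R ^ d * ε) * (R ^ d * ε') * (max R R) ^ (α - d) =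
              (R ^ α * ε') * (R ^ d * ε) := by
            rw [max_self, Real.rpow_sub hR, Real.rpow_natCast]
            field_simp
          rw [this, ENNReal.ofReal_mul (p := R ^ α * ε') (by positivity)]
          ring
      _ ≤ _ := by
          gcongr
          exact le_self_add
  have hm : 0 < max R R' := lt_max_of_lt_left hR
  have hker : ∀ x ∈ shellSet d R ε, ∀ y ∈ shellSet d R' ε', (‖x - y‖ₑ ^ ((d : ℝ) - α))⁻¹ ≤
      ENNReal.ofReal ((1 / 4) ^ (α - d) * (max R R') ^ (α - d)) := by
    intro x hx y hy
    have := norm_le_of_mem_shellSet hR hε hx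
    have := norm_le_of_mem_shellSet hR' hε' hy
    have := le_norm_of_mem_shellSet hR hε hx
    have := le_norm_of_mem_shellSet hR' hε' hy
    have hle : 1 / 4 * max R R' ≤ ‖x - y‖ := by
      rcases hRR.resolve_left heq with h4 | h4
      · rw [max_eq_right (by linarith)]
        have := norm_sub_norm_le y x
        rw [norm_sub_rev] at this
        linarith
      · rw [max_eq_left (by linarith)]
        have := norm_sub_norm_le x y
        linarith
    have hpos : 0 < ‖x - y‖ := lt_of_lt_of_le (by positivity) hle
    rw [← ofReal_norm, ENNReal.ofReal_rpow_of_pos hpos,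
      ← ENNReal.ofReal_inv_of_pos (by positivity), ← Real.rpow_neg hpos.le, neg_sub,
      ← Real.mul_rpow (by positivity) hm.le]
    exact ENNReal.ofReal_le_ofReal
      (Real.rpow_le_rpow_of_nonpos (by positivity) hle (by linarith))
  calc ∫⁻ x in shellSet d R ε, ∫⁻ y in shellSet d R' ε', (‖x - y‖ₑ ^ ((d : ℝ) - α))⁻¹
      ≤ ∫⁻ x in shellSet d R ε, ∫⁻ y in shellSet d R' ε',
          ENNReal.ofReal ((1 / 4) ^ (α - d) * (max R R') ^ (α - d)) :=
        setLIntegral_mono measurable_const fun x hx =>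
          setLIntegral_mono measurable_const fun y hy => hker x hx y hy
    _ = ENNReal.ofReal ((1 / 4) ^ (α - d) * (max R R') ^ (α - d)) * volume (shellSet d R' ε') *
          volume (shellSet d R ε) := by
        simp only [lintegral_const, Measure.restrict_apply_univ]
    _ ≤ ENNReal.ofReal ((1 / 4) ^ (α - d) * (max R R') ^ (α - d)) *
          (V * ENNReal.ofReal (R' ^ d * ε')) * (V * ENNReal.ofReal (R ^ d * ε)) := by
        gcongr
        · exact hvol R' hR' ε' hε'
        · exact hvol R hR ε hε
    _ = V * V * ENNReal.ofReal ((1 / 4) ^ (α - d)) *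
          ENNReal.ofReal ((R ^ d * ε) * (R' ^ d * ε') * (max R R') ^ (α - d)) := by
        rw [ENNReal.ofReal_mul hc4.le,
          ENNReal.ofReal_mul (p := (R ^ d * ε) * (R' ^ d * ε')) (by positivity),
          ENNReal.ofReal_mul (p := R ^ d * ε) (by positivity)]
        ring
    _ ≤ _ := by
        gcongr
        exact le_add_self

/-- A smooth cutoff on the line, equal to `1` on `[-1/2, 1/2]` and supported in `[-1, 1]`. -/
noncomputable def lineCutoff : ContDiffBump (0 : ℝ) := ⟨1 / 2, 1, by norm_num, by norm_num⟩

/-- A smooth radial function of height `A` supported in `shellSet d R ε`. -/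
noncomputable def radialShell (d : ℕ) (A R ε : ℝ) (x : EuclideanSpace ℝ (Fin d)) : ℝ :=
  A * lineCutoff ((‖x‖ ^ 2 / R ^ 2 - 1) / ε)

lemma radialShell_nonneg {d : ℕ} {A : ℝ} (hA : 0 ≤ A) (R ε : ℝ) (x : EuclideanSpace ℝ (Fin d)) :
    0 ≤ radialShell d A R ε x :=
  mul_nonneg hA lineCutoff.nonneg

lemma radialShell_le {d : ℕ} {A : ℝ} (hA : 0 ≤ A) (R ε : ℝ) (x : EuclideanSpace ℝ (Fin d)) :
    radialShell d A R ε x ≤ A :=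
  mul_le_of_le_one_right hA lineCutoff.le_one

lemma radialShell_eq_zero {d : ℕ} (A : ℝ) {R ε : ℝ} (hε : 0 < ε) {x : EuclideanSpace ℝ (Fin d)}
    (hx : x ∉ shellSet d R ε) : radialShell d A R ε x = 0 := by
  have hx' : ¬ |‖x‖ ^ 2 / R ^ 2 - 1| ≤ ε := hx
  rw [radialShell, lineCutoff.zero_of_le_dist, mul_zero]
  rw [dist_zero_right, Real.norm_eq_abs, abs_div, abs_of_pos hε, le_div_iff₀ hε]
  change 1 * ε ≤ _
  linarith

lemma radialShell_eq {d : ℕ} (A : ℝ) {R ε : ℝ} (hε : 0 < ε) {x : EuclideanSpace ℝ (Fin d)}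
    (hx : x ∈ shellSet d R (ε / 2)) : radialShell d A R ε x = A := by
  have hx' : |‖x‖ ^ 2 / R ^ 2 - 1| ≤ ε / 2 := hx
  rw [radialShell, lineCutoff.one_of_mem_closedBall, mul_one]
  rw [mem_closedBall_zero_iff, Real.norm_eq_abs, abs_div, abs_of_pos hε, div_le_iff₀ hε]
  change _ ≤ 1 / 2 * ε
  linarith

lemma contDiff_radialShell (d : ℕ) (A R ε : ℝ) : ContDiff ℝ 1 (radialShell d A R ε) :=
  contDiff_const.mul (lineCutoff.contDiff.comp
    ((((contDiff_norm_sq ℝ).div_const _).sub contDiff_const).div_const _))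

lemma fderiv_radialShell_eq_zero {d : ℕ} (A : ℝ) {R ε : ℝ} (hε : 0 < ε)
    {x : EuclideanSpace ℝ (Fin d)} (hx : x ∉ shellSet d R ε) :
    fderiv ℝ (radialShell d A R ε) x = 0 := by
  have : radialShell d A R ε =ᶠ[nhds x] fun _ => 0 := by
    filter_upwards [(isClosed_shellSet d R ε).isOpen_compl.mem_nhds hx] with y hy
    exact radialShell_eq_zero A hε hy
  rw [this.fderiv_eq]
  simp

lemma exists_abs_radialShell_sub_le :
    ∃ L ≥ (1 : ℝ), ∀ (d : ℕ) (A : ℝ), 0 ≤ A → ∀ R > 0, ∀ ε > 0, ε ≤ (1 / 2 : ℝ) →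
      ∀ x y : EuclideanSpace ℝ (Fin d), |radialShell d A R ε x - radialShell d A R ε y| ≤
        A * min 1 (L / (ε * R) * ‖x - y‖) := by
  obtain ⟨K, hK⟩ := ContDiff.lipschitzWith_of_hasCompactSupport (𝕂 := ℝ)
    lineCutoff.hasCompactSupport (lineCutoff.contDiff (n := 1)) (by simp)
  refine ⟨max 1 (4 * K), le_max_left _ _, fun d A hA R hR ε hε hε2 => ?_⟩
  set L : ℝ := max 1 (4 * (K : ℝ)) with hL
  have hLK : 4 * (K : ℝ) ≤ L := le_max_right _ _
  have hL1 : 1 ≤ L := le_max_left _ _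
  have key : ∀ x y : EuclideanSpace ℝ (Fin d), x ∈ shellSet d R ε →
      |radialShell d A R ε x - radialShell d A R ε y| ≤ A * (L / (ε * R) * ‖x - y‖) := by
    intro x y hx
    have hx2 := norm_le_of_mem_shellSet hR hε2 hx
    have hdist := abs_norm_sub_norm_le x y
    rcases le_or_gt ‖y‖ (2 * R) with hy | hy
    · have hlip := hK.dist_le_mul ((‖x‖ ^ 2 / R ^ 2 - 1) / ε) ((‖y‖ ^ 2 / R ^ 2 - 1) / ε)
      rw [Real.dist_eq, Real.dist_eq] at hlip
      have harg : |(‖x‖ ^ 2 / R ^ 2 - 1) / ε - (‖y‖ ^ 2 / R ^ 2 - 1) / ε| ≤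
          4 * (‖x - y‖ / (ε * R)) := by
        have : (‖x‖ ^ 2 / R ^ 2 - 1) / ε - (‖y‖ ^ 2 / R ^ 2 - 1) / ε =
            (‖x‖ - ‖y‖) * (‖x‖ + ‖y‖) / (ε * R ^ 2) := by field_simp; ring
        rw [this, abs_div, abs_mul, abs_of_pos (by positivity : 0 < ε * R ^ 2),
          abs_of_nonneg (by positivity : 0 ≤ ‖x‖ + ‖y‖)]
        calc |‖x‖ - ‖y‖| * (‖x‖ + ‖y‖) / (ε * R ^ 2) ≤ ‖x - y‖ * (4 * R) / (ε * R ^ 2) := by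
              gcongr
              linarith
          _ = 4 * (‖x - y‖ / (ε * R)) := by field_simp
      rw [radialShell, radialShell, ← mul_sub, abs_mul, abs_of_nonneg hA]
      refine mul_le_mul_of_nonneg_left ?_ hA
      calc _ ≤ (K : ℝ) * (4 * (‖x - y‖ / (ε * R))) :=
            hlip.trans (mul_le_mul_of_nonneg_left harg K.2)
        _ = 4 * K / (ε * R) * ‖x - y‖ := by ring
        _ ≤ L / (ε * R) * ‖x - y‖ := by gcongr
    · have hy0 : radialShell d A R ε y = 0 := radialShell_eq_zero A hε fun h => by
        linarith [norm_le_of_mem_shellSet hR hε2 h]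
      rw [hy0, sub_zero, abs_of_nonneg (radialShell_nonneg hA _ _ _)]
      refine (radialShell_le hA _ _ _).trans (le_mul_of_one_le_right hA ?_)
      rw [div_mul_eq_mul_div, one_le_div (by positivity)]
      have : R / 2 ≤ ‖x - y‖ := by linarith [(abs_le.1 hdist).1]
      nlinarith
  intro x y
  rw [mul_min_of_nonneg _ _ hA, mul_one]
  refine le_min ?_ ?_
  · rw [abs_le]
    have := radialShell_nonneg hA R ε x
    have := radialShell_nonneg hA R ε y
    have := radialShell_le hA R ε x
    have := radialShell_le hA R ε y
    constructor <;> linarith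
  · by_cases hx : x ∈ shellSet d R ε
    · exact key x y hx
    by_cases hy : y ∈ shellSet d R ε
    · rw [abs_sub_comm, norm_sub_rev]
      exact key y x hy
    rw [radialShell_eq_zero A hε hx, radialShell_eq_zero A hε hy, sub_zero, abs_zero]
    positivity

lemma exists_norm_fderiv_radialShell_le :
    ∃ L ≥ (1 : ℝ), ∀ (d : ℕ) (A : ℝ), 0 ≤ A → ∀ R > 0, ∀ ε > 0, ε ≤ (1 / 2 : ℝ) →
      ∀ x : EuclideanSpace ℝ (Fin d), ‖fderiv ℝ (radialShell d A R ε) x‖ ≤ A * (L / (ε * R)) := by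
  obtain ⟨L, hL1, hL⟩ := exists_abs_radialShell_sub_le
  refine ⟨L, hL1, fun d A hA R hR ε hε hε2 x => ?_⟩
  refine norm_fderiv_le_of_lip' ℝ (by positivity) (Filter.Eventually.of_forall fun y => ?_)
  rw [Real.norm_eq_abs, mul_assoc]
  exact (hL d A hA R hR ε hε hε2 y x).trans
    (mul_le_mul_of_nonneg_left (min_le_right _ _) hA)

/-- The Gagliardo-type energy of one shell. -/
lemma exists_lintegral_lintegral_radialShell_le {d : ℕ} (hd : 2 ≤ d) {s p : ℝ} (hs0 : 0 < s)
    (hs1 : s < 1) (hp : 0 < p) :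
    ∃ C : ENNReal, C ≠ ⊤ ∧ ∀ A ≥ (0 : ℝ), ∀ R > 0, ∀ ε > 0, ε ≤ (1 / 2 : ℝ) →
      ∫⁻ x, ∫⁻ y, ENNReal.ofReal (|radialShell d A R ε x - radialShell d A R ε y| ^ p /
          ‖x - y‖ ^ ((d : ℝ) + s * p)) ≤
        C * ENNReal.ofReal (A ^ p * R ^ ((d : ℝ) - s * p) * ε ^ (1 - s * p)) := by
  have : Nonempty (Fin d) := ⟨⟨0, by omega⟩⟩
  obtain ⟨L, hL1, hL⟩ := exists_abs_radialShell_sub_le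
  obtain ⟨V, hV, hvol⟩ := exists_volume_shellSet_le hd
  set M : EuclideanSpace ℝ (Fin d) → ENNReal :=
    fun z => ENNReal.ofReal (min 1 ‖z‖ ^ p / ‖z‖ ^ ((d : ℝ) + s * p)) with hM
  have hMm : Measurable M := by fun_prop
  have hJ : ∫⁻ z, M z < ⊤ := by
    have := lintegral_min_one_norm_rpow_div_lt_top
      (volume : Measure (EuclideanSpace ℝ (Fin d))) hs0 hs1 hp
    rwa [finrank_euclideanSpace_fin] at this
  set J : ENNReal := ∫⁻ z, M z with hJdef
  refine ⟨2 * V * J * ENNReal.ofReal (L ^ (s * p)), by finiteness, ?_⟩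
  intro A hA R hR ε hε hε2
  set c : ℝ := L / (ε * R) with hc
  have hcpos : 0 < c := by positivity
  set B : ENNReal := ENNReal.ofReal (A ^ p * c ^ ((d : ℝ) + s * p)) with hB
  set S := shellSet d R ε with hS
  have hSm : MeasurableSet S := measurableSet_shellSet _ _ _
  set N : EuclideanSpace ℝ (Fin d) → ENNReal := fun z => B * M (c • z) with hN
  have hNm : Measurable N := (hMm.comp (measurable_const_smul c)).const_mul _
  have hpt : ∀ x y : EuclideanSpace ℝ (Fin d),
      ENNReal.ofReal (|radialShell d A R ε x - radialShell d A R ε y| ^ p /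
        ‖x - y‖ ^ ((d : ℝ) + s * p)) ≤
          S.indicator 1 x * N (x - y) + S.indicator 1 y * N (x - y) := by
    intro x y
    by_cases hxy : x ∉ S ∧ y ∉ S
    · rw [radialShell_eq_zero A hε hxy.1, radialShell_eq_zero A hε hxy.2, sub_zero, abs_zero,
        Real.zero_rpow hp.ne', zero_div, ENNReal.ofReal_zero]
      exact zero_le
    have hmain : ENNReal.ofReal (|radialShell d A R ε x - radialShell d A R ε y| ^ p /
        ‖x - y‖ ^ ((d : ℝ) + s * p)) ≤ N (x - y) := by
      rw [hN, hM, hB]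
      simp only
      rw [← ENNReal.ofReal_mul (by positivity), norm_smul, Real.norm_of_nonneg hcpos.le]
      refine ENNReal.ofReal_le_ofReal ?_
      rw [Real.mul_rpow hcpos.le (norm_nonneg _)]
      calc _ ≤ (A * min 1 (c * ‖x - y‖)) ^ p / ‖x - y‖ ^ ((d : ℝ) + s * p) := by
            gcongr
            exact hL d A hA R hR ε hε hε2 x y
        _ = _ := by
            rw [Real.mul_rpow hA (by positivity)]
            have := (Real.rpow_pos_of_pos hcpos ((d : ℝ) + s * p)).ne'
            rw [mul_div_assoc', mul_right_comm, mul_comm (A ^ p * _), mul_div_mul_left _ _ this]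
    refine hmain.trans ?_
    by_cases hx : x ∈ S
    · simp [hx]
    · have hy : y ∈ S := by tauto
      simp [hy]
  have hNint : ∫⁻ z, N z = B * (ENNReal.ofReal ((c ^ d)⁻¹) * J) := by
    rw [hN, lintegral_const_mul' _ _ ENNReal.ofReal_ne_top, lintegral_comp_smul_of_pos _ hcpos M,
      finrank_euclideanSpace_fin]
  have hI1 : ∫⁻ x, ∫⁻ y, S.indicator 1 x * N (x - y) = volume S * ∫⁻ z, N z := by
    have : ∀ x, ∫⁻ y, S.indicator 1 x * N (x - y) = S.indicator 1 x * ∫⁻ z, N z := fun x => by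
      rw [lintegral_const_mul (f := fun y => N (x - y)) _ (hNm.comp (measurable_const_sub x)),
        lintegral_sub_left_eq_self N x]
    rw [lintegral_congr this, lintegral_mul_const _ (measurable_one.indicator hSm),
      lintegral_indicator_one hSm]
  have hI2 : ∫⁻ x, ∫⁻ y, S.indicator 1 y * N (x - y) = volume S * ∫⁻ z, N z := by
    rw [lintegral_lintegral_swap]
    · have : ∀ y, ∫⁻ x, S.indicator 1 y * N (x - y) = S.indicator 1 y * ∫⁻ z, N z := fun y => by
        rw [lintegral_const_mul (f := fun x => N (x - y)) _ (hNm.comp (measurable_sub_const y)),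
          lintegral_sub_right_eq_self N y]
      rw [lintegral_congr this, lintegral_mul_const _ (measurable_one.indicator hSm),
        lintegral_indicator_one hSm]
    · exact (((measurable_one.indicator hSm).comp measurable_snd).mul
        (hNm.comp (measurable_fst.sub measurable_snd))).aemeasurable
  calc _ ≤ ∫⁻ x, ∫⁻ y, (S.indicator 1 x * N (x - y) + S.indicator 1 y * N (x - y)) :=
        lintegral_mono fun x => lintegral_mono fun y => hpt x y
    _ = (∫⁻ x, ∫⁻ y, S.indicator 1 x * N (x - y)) + ∫⁻ x, ∫⁻ y, S.indicator 1 y * N (x - y) := by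
        rw [← lintegral_add_left]
        · refine lintegral_congr fun x => ?_
          rw [lintegral_add_left]
          exact (hNm.comp (measurable_const_sub x)).const_mul _
        · exact (((measurable_one.indicator hSm).comp measurable_fst).mul
            (hNm.comp (measurable_fst.sub measurable_snd))).lintegral_prod_right'
    _ = 2 * (volume S * (B * (ENNReal.ofReal ((c ^ d)⁻¹) * J))) := by
        rw [hI1, hI2, hNint, two_mul]
    _ ≤ 2 * (V * ENNReal.ofReal (R ^ d * ε) * (B * (ENNReal.ofReal ((c ^ d)⁻¹) * J))) := by
        gcongr
        exact hvol R hR ε hε2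
    _ = 2 * V * J * (ENNReal.ofReal (R ^ d * ε) * (B * ENNReal.ofReal ((c ^ d)⁻¹))) := by ring
    _ = 2 * V * J * (ENNReal.ofReal (L ^ (s * p)) *
          ENNReal.ofReal (A ^ p * R ^ ((d : ℝ) - s * p) * ε ^ (1 - s * p))) := by
        congr 1
        rw [hB, ← ENNReal.ofReal_mul (by positivity), ← ENNReal.ofReal_mul (by positivity),
          ← ENNReal.ofReal_mul (by positivity)]
        congr 1
        rw [Real.rpow_sub hR, Real.rpow_sub hε, Real.rpow_add hcpos, hc,
          Real.div_rpow (by positivity) (by positivity) (s * p),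
          Real.mul_rpow hε.le hR.le (z := s * p), Real.rpow_natCast, Real.rpow_natCast,
          Real.rpow_one]
        field_simp
    _ = _ := by ring

/-- Parameters of finitely many spherical shells whose radii are far apart. -/
structure ShellFamily (ι : Type*) where
  /-- The heights. -/
  A : ι → ℝ
  /-- The radii. -/
  R : ι → ℝ
  /-- The relative squared widths. -/
  ε : ι → ℝ
  A_pos : ∀ k, 0 < A k
  R_pos : ∀ k, 0 < R k
  ε_pos : ∀ k, 0 < ε k
  ε_le : ∀ k, ε k ≤ 1 / 2
  separated : ∀ j k, j ≠ k → 4 * R j ≤ R k ∨ 4 * R k ≤ R j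

namespace ShellFamily

variable {ι : Type*} (F : ShellFamily ι) (d : ℕ)

/-- The profile of the `k`-th shell. -/
noncomputable def shell (k : ι) : EuclideanSpace ℝ (Fin d) → ℝ :=
  radialShell d (F.A k) (F.R k) (F.ε k)

/-- The support of the `k`-th shell. -/
def supp (k : ι) : Set (EuclideanSpace ℝ (Fin d)) := shellSet d (F.R k) (F.ε k)

/-- The superposition of the shells. -/
noncomputable def total [Fintype ι] (x : EuclideanSpace ℝ (Fin d)) : ℝ := ∑ k, F.shell d k x

variable {d}

lemma eq_of_mem_supp {j k : ι} {x : EuclideanSpace ℝ (Fin d)} (hj : x ∈ F.supp d j)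
    (hk : x ∈ F.supp d k) : j = k := by
  by_contra hne
  exact Set.disjoint_left.1 (disjoint_shellSet (F.R_pos j) (F.R_pos k) (F.ε_le j) (F.ε_le k)
    (F.separated j k hne)) hj hk

lemma measurableSet_supp (k : ι) : MeasurableSet (F.supp d k) := measurableSet_shellSet _ _ _

lemma shell_nonneg (k : ι) (x : EuclideanSpace ℝ (Fin d)) : 0 ≤ F.shell d k x :=
  radialShell_nonneg (F.A_pos k).le _ _ _

lemma shell_eq_zero {k : ι} {x : EuclideanSpace ℝ (Fin d)} (hx : x ∉ F.supp d k) :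
    F.shell d k x = 0 :=
  radialShell_eq_zero _ (F.ε_pos k) hx

lemma contDiff_shell (k : ι) : ContDiff ℝ 1 (F.shell d k) := contDiff_radialShell _ _ _ _

variable [Fintype ι]

lemma total_eq_shell {k : ι} {x : EuclideanSpace ℝ (Fin d)} (hx : x ∈ F.supp d k) :
    F.total d x = F.shell d k x :=
  Finset.sum_eq_single_of_mem k (Finset.mem_univ k) fun _ _ hj =>
    F.shell_eq_zero fun h => hj (F.eq_of_mem_supp h hx)

lemma total_eq_zero {x : EuclideanSpace ℝ (Fin d)} (hx : ∀ k, x ∉ F.supp d k) :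
    F.total d x = 0 :=
  Finset.sum_eq_zero fun k _ => F.shell_eq_zero (hx k)

lemma total_eq_of_norm_eq {x y : EuclideanSpace ℝ (Fin d)} (h : ‖x‖ = ‖y‖) :
    F.total d x = F.total d y := by
  simp only [total, shell, radialShell, h]

lemma contDiff_total : ContDiff ℝ 1 (F.total d) :=
  ContDiff.sum fun k _ => F.contDiff_shell k

lemma hasCompactSupport_total : HasCompactSupport (F.total d) := by
  refine HasCompactSupport.of_support_subset_isCompact
    (isCompact_closedBall (0 : EuclideanSpace ℝ (Fin d)) (∑ k, 5 / 4 * F.R k)) fun x hx => ?_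
  obtain ⟨k, hk⟩ : ∃ k, x ∈ F.supp d k := by
    by_contra! h
    exact hx (F.total_eq_zero h)
  rw [mem_closedBall_zero_iff]
  refine (norm_le_of_mem_shellSet (F.R_pos k) (F.ε_le k) hk).trans ?_
  exact Finset.single_le_sum (f := fun k => 5 / 4 * F.R k)
    (fun j _ => mul_nonneg (by norm_num) (F.R_pos j).le) (Finset.mem_univ k)

/-- At most one summand is nonzero at each point. -/
lemma rpow_total_le {q : ℝ} (hq : 0 < q) (x : EuclideanSpace ℝ (Fin d)) :
    |F.total d x| ^ q ≤ ∑ k, (F.supp d k).indicator (fun _ => F.A k ^ q) x := by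
  have hnn (k : ι) : 0 ≤ (F.supp d k).indicator (fun _ => F.A k ^ q) x :=
    Set.indicator_nonneg (fun _ _ => Real.rpow_nonneg (F.A_pos k).le q) x
  by_cases h : ∃ k, x ∈ F.supp d k
  · obtain ⟨k, hk⟩ := h
    refine le_trans ?_ (Finset.single_le_sum (fun j _ => hnn j) (Finset.mem_univ k))
    rw [Set.indicator_of_mem hk, F.total_eq_shell hk, abs_of_nonneg (F.shell_nonneg k x)]
    exact Real.rpow_le_rpow (F.shell_nonneg k x) (radialShell_le (F.A_pos k).le _ _ _) hq.le
  · push Not at h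
    rw [F.total_eq_zero h, abs_zero, Real.zero_rpow hq.ne']
    exact Finset.sum_nonneg fun k _ => hnn k

lemma norm_fderiv_total_rpow_le {p L : ℝ} (hp : 0 < p)
    (hL : ∀ k x, ‖fderiv ℝ (F.shell d k) x‖ ≤ F.A k * (L / (F.ε k * F.R k)))
    (hL0 : 0 ≤ L) (x : EuclideanSpace ℝ (Fin d)) :
    ‖fderiv ℝ (F.total d) x‖ ^ p ≤
      ∑ k, (F.supp d k).indicator (fun _ => (F.A k * (L / (F.ε k * F.R k))) ^ p) x := by
  have hpos (k : ι) : 0 ≤ F.A k * (L / (F.ε k * F.R k)) := by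
    have := F.A_pos k; have := F.R_pos k; have := F.ε_pos k; positivity
  have hnn (k : ι) : 0 ≤ (F.supp d k).indicator
      (fun _ => (F.A k * (L / (F.ε k * F.R k))) ^ p) x :=
    Set.indicator_nonneg (fun _ _ => Real.rpow_nonneg (hpos k) p) x
  have hsum : fderiv ℝ (F.total d) x = ∑ k, fderiv ℝ (F.shell d k) x :=
    fderiv_fun_sum fun k _ => (F.contDiff_shell k).differentiable (by simp) x
  have hzero (k : ι) (hk : x ∉ F.supp d k) : fderiv ℝ (F.shell d k) x = 0 :=
    fderiv_radialShell_eq_zero _ (F.ε_pos k) hk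
  by_cases h : ∃ k, x ∈ F.supp d k
  · obtain ⟨k, hk⟩ := h
    refine le_trans ?_ (Finset.single_le_sum (fun j _ => hnn j) (Finset.mem_univ k))
    rw [Set.indicator_of_mem hk, hsum, Finset.sum_eq_single_of_mem k (Finset.mem_univ k)
      fun j _ hj => hzero j fun h => hj (F.eq_of_mem_supp h hk)]
    exact Real.rpow_le_rpow (norm_nonneg _) (hL k x) hp.le
  · push Not at h
    rw [hsum, Finset.sum_eq_zero fun k _ => hzero k (h k), norm_zero, Real.zero_rpow hp.ne']
    exact Finset.sum_nonneg fun k _ => hnn k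

/-- At most two summands are nonzero for each pair of points. -/
lemma abs_total_sub_rpow_le {p : ℝ} (hp : 1 ≤ p) (x y : EuclideanSpace ℝ (Fin d)) :
    |F.total d x - F.total d y| ^ p ≤
      2 ^ (p - 1) * ∑ k, |F.shell d k x - F.shell d k y| ^ p := by
  classical
  set T : Finset ι := Finset.univ.filter (fun k => x ∈ F.supp d k) ∪
    Finset.univ.filter (fun k => y ∈ F.supp d k) with hT
  have hcard1 (z : EuclideanSpace ℝ (Fin d)) :
      (Finset.univ.filter fun k => z ∈ F.supp d k).card ≤ 1 :=
    Finset.card_le_one.2 fun j hj k hk =>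
      F.eq_of_mem_supp (Finset.mem_filter.1 hj).2 (Finset.mem_filter.1 hk).2
  have hcard : (T.card : ℝ) ≤ 2 := by
    have : T.card ≤ 2 := (Finset.card_union_le _ _).trans (add_le_add (hcard1 x) (hcard1 y))
    exact_mod_cast this
  have hsum : F.total d x - F.total d y = ∑ k ∈ T, (F.shell d k x - F.shell d k y) := by
    rw [total, total, ← Finset.sum_sub_distrib]
    refine (Finset.sum_subset (Finset.subset_univ T) fun k _ hk => ?_).symm
    simp only [hT, Finset.mem_union, Finset.mem_filter, Finset.mem_univ, true_and, not_or] at hk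
    rw [F.shell_eq_zero hk.1, F.shell_eq_zero hk.2, sub_zero]
  calc |F.total d x - F.total d y| ^ p
      ≤ (∑ k ∈ T, |F.shell d k x - F.shell d k y|) ^ p := by
        rw [hsum]
        exact Real.rpow_le_rpow (abs_nonneg _) (Finset.abs_sum_le_sum_abs _ _) (by linarith)
    _ ≤ (T.card : ℝ) ^ (p - 1) * ∑ k ∈ T, |F.shell d k x - F.shell d k y| ^ p :=
        Real.rpow_sum_le_const_mul_sum_rpow T _ hp
    _ ≤ 2 ^ (p - 1) * ∑ k, |F.shell d k x - F.shell d k y| ^ p :=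
        mul_le_mul (Real.rpow_le_rpow (by positivity) hcard (by linarith))
          (Finset.sum_le_sum_of_subset_of_nonneg (Finset.subset_univ T) fun k _ _ => by positivity)
          (Finset.sum_nonneg fun k _ => by positivity) (by positivity)

end ShellFamily

lemma le_toReal_mul_of_enorm_le {r t : ℝ} {C : ENNReal} (hC : C ≠ ⊤) (ht : 0 ≤ t)
    (h : ‖r‖ₑ ≤ C * ENNReal.ofReal t) : r ≤ C.toReal * t := by
  refine (le_abs_self r).trans ?_
  have := ENNReal.toReal_mono (by finiteness) h
  rwa [ENNReal.toReal_mul, ENNReal.toReal_ofReal ht, toReal_enorm, Real.norm_eq_abs] at this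

namespace ShellFamily

lemma exists_le_integral_rpow_total {d : ℕ} (hd : 2 ≤ d) {γ : ℝ} (hγ : 0 < γ) :
    ∃ c > (0 : ℝ), ∀ {ι : Type} [Fintype ι] (F : ShellFamily ι),
      c * ∑ k, F.A k ^ γ * (F.R k ^ d * F.ε k) ≤ ∫ x, |F.total d x| ^ γ := by
  obtain ⟨c, hc, h⟩ := exists_le_volume_shellSet hd
  refine ⟨c / 2, by positivity, fun {ι} _ F => ?_⟩
  set S : ι → Set (EuclideanSpace ℝ (Fin d)) := fun k => shellSet d (F.R k) (F.ε k / 2) with hS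
  have hSm (k) : MeasurableSet (S k) := measurableSet_shellSet _ _ _
  have hε2 (k) : F.ε k / 2 ≤ 1 / 2 := by linarith [F.ε_pos k, F.ε_le k]
  have hint (k) : Integrable ((S k).indicator fun _ => F.A k ^ γ) :=
    (integrable_indicator_iff (hSm k)).2
      (integrableOn_const (volume_shellSet_lt_top (F.R_pos k) (hε2 k)).ne)
  have hcont : Continuous (F.total d) := F.contDiff_total.continuous
  calc c / 2 * ∑ k, F.A k ^ γ * (F.R k ^ d * F.ε k)
      ≤ ∑ k, ∫ x, (S k).indicator (fun _ => F.A k ^ γ) x := by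
        rw [Finset.mul_sum]
        refine Finset.sum_le_sum fun k _ => ?_
        rw [integral_indicator (hSm k), setIntegral_const, smul_eq_mul]
        have h1 := h (F.R k) (F.R_pos k) (F.ε k / 2) (by linarith [F.ε_pos k]) (hε2 k)
        have := mul_le_mul_of_nonneg_right h1 (Real.rpow_nonneg (F.A_pos k).le γ)
        linarith
    _ = ∫ x, ∑ k, (S k).indicator (fun _ => F.A k ^ γ) x :=
        (integral_finsetSum _ fun k _ => hint k).symm
    _ ≤ ∫ x, |F.total d x| ^ γ := by
        refine integral_mono (integrable_finsetSum _ fun k _ => hint k) ?_ fun x => ?_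
        · refine Continuous.integrable_of_hasCompactSupport
            (hcont.abs.rpow_const fun _ => Or.inr hγ.le) ?_
          exact F.hasCompactSupport_total.comp_left (g := fun t : ℝ => |t| ^ γ)
            (by simp [Real.zero_rpow hγ.ne'])
        · simp only
          by_cases hx : ∃ k, x ∈ S k
          · obtain ⟨k, hk⟩ := hx
            have hsub (j) (hj : x ∈ S j) : x ∈ F.supp d j := by
              have hj' : |‖x‖ ^ 2 / F.R j ^ 2 - 1| ≤ F.ε j / 2 := hj
              change |‖x‖ ^ 2 / F.R j ^ 2 - 1| ≤ F.ε j
              linarith [F.ε_pos j]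
            rw [Finset.sum_eq_single_of_mem k (Finset.mem_univ k) fun j _ hj =>
              Set.indicator_of_notMem (fun hj' => hj (F.eq_of_mem_supp (hsub j hj') (hsub k hk))) _,
              Set.indicator_of_mem hk, F.total_eq_shell (hsub k hk), shell,
              radialShell_eq _ (F.ε_pos k) hk, abs_of_pos (F.A_pos k)]
          · push Not at hx
            rw [Finset.sum_eq_zero fun k _ => Set.indicator_of_notMem (hx k) _]
            positivity

lemma exists_coulombEnergy_total_le {d : ℕ} (hd : 2 ≤ d) {q α : ℝ} (hq : 0 < q) (hα1 : 1 < α)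
    (hαd : α ≤ d) :
    ∃ C > (0 : ℝ), ∀ {ι : Type} [Fintype ι] (F : ShellFamily ι),
      coulombEnergy d q α (F.total d) ≤
        C * ∑ j, ∑ k, F.A j ^ q * F.A k ^ q * ((F.R j ^ d * F.ε j) * (F.R k ^ d * F.ε k) *
          max (F.R j) (F.R k) ^ (α - d)) := by
  obtain ⟨C, hC, h⟩ := setLIntegral_setLIntegral_shellSet_le hd hα1 hαd
  refine ⟨C.toReal + 1, by positivity, fun {ι} _ F => ?_⟩
  have hA (k : ι) : 0 ≤ F.A k ^ q := Real.rpow_nonneg (F.A_pos k).le q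
  set K : EuclideanSpace ℝ (Fin d) → ENNReal := fun z => (‖z‖ₑ ^ ((d : ℝ) - α))⁻¹ with hK
  have hKm : Measurable K := by fun_prop
  have hterm (j k : ι) : 0 ≤ F.A j ^ q * F.A k ^ q * ((F.R j ^ d * F.ε j) *
      (F.R k ^ d * F.ε k) * max (F.R j) (F.R k) ^ (α - d)) := by
    have := F.R_pos j; have := F.R_pos k; have := F.ε_pos j; have := F.ε_pos k
    have : 0 < max (F.R j) (F.R k) := lt_max_of_lt_left (F.R_pos j)
    have := hA j; have := hA k
    positivity
  set t : ι → ι → EuclideanSpace ℝ (Fin d) → EuclideanSpace ℝ (Fin d) → ENNReal :=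
    fun j k x y => ENNReal.ofReal (F.A j ^ q * F.A k ^ q) *
      ((F.supp d j).indicator 1 x * ((F.supp d k).indicator 1 y * K (x - y))) with ht
  have htm (j k) : Measurable (Function.uncurry (t j k)) :=
    ((measurable_one.indicator (F.measurableSet_supp j)).comp measurable_fst |>.mul
      (((measurable_one.indicator (F.measurableSet_supp k)).comp measurable_snd).mul
        (hKm.comp (measurable_fst.sub measurable_snd)))).const_mul _
  have hpt (x y : EuclideanSpace ℝ (Fin d)) :
      ‖|F.total d x| ^ q * |F.total d y| ^ q / ‖x - y‖ ^ ((d : ℝ) - α)‖ₑ ≤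
        ∑ j, ∑ k, t j k x y := by
    have hker : ENNReal.ofReal ((‖x - y‖ ^ ((d : ℝ) - α))⁻¹) ≤ K (x - y) := by
      refine (ENNReal.ofReal_inv_le).trans (le_of_eq ?_)
      rw [hK, ← ENNReal.ofReal_rpow_of_nonneg (norm_nonneg _) (by linarith), ofReal_norm]
    rw [Real.enorm_of_nonneg (by positivity), div_eq_mul_inv, ENNReal.ofReal_mul (by positivity)]
    refine (mul_le_mul' (ENNReal.ofReal_le_ofReal (mul_le_mul (F.rpow_total_le hq x)
      (F.rpow_total_le hq y) (by positivity)
      (Finset.sum_nonneg fun k _ => Set.indicator_nonneg (fun _ _ => hA k) x))) hker).trans ?_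
    rw [Finset.sum_mul_sum, ENNReal.ofReal_sum_of_nonneg fun j _ => Finset.sum_nonneg fun k _ =>
      mul_nonneg (Set.indicator_nonneg (fun _ _ => hA j) x)
        (Set.indicator_nonneg (fun _ _ => hA k) y), Finset.sum_mul]
    refine Finset.sum_le_sum fun j _ => ?_
    rw [ENNReal.ofReal_sum_of_nonneg fun k _ =>
      mul_nonneg (Set.indicator_nonneg (fun _ _ => hA j) x)
        (Set.indicator_nonneg (fun _ _ => hA k) y), Finset.sum_mul]
    refine Finset.sum_le_sum fun k _ => ?_
    by_cases hx : x ∈ F.supp d j <;> by_cases hy : y ∈ F.supp d k <;> simp [ht, hx, hy]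
  have hint (j k : ι) : ∫⁻ x, ∫⁻ y, t j k x y ≤ C * ENNReal.ofReal (F.A j ^ q * F.A k ^ q *
      ((F.R j ^ d * F.ε j) * (F.R k ^ d * F.ε k) * max (F.R j) (F.R k) ^ (α - d))) := by
    have heq : ∫⁻ x, ∫⁻ y, t j k x y = ENNReal.ofReal (F.A j ^ q * F.A k ^ q) *
        ∫⁻ x in F.supp d j, ∫⁻ y in F.supp d k, K (x - y) := by
      rw [← lintegral_indicator (F.measurableSet_supp j),
        ← lintegral_const_mul' _ _ ENNReal.ofReal_ne_top]
      refine lintegral_congr fun x => ?_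
      rw [ht]
      simp only
      rw [lintegral_const_mul' _ _ ENNReal.ofReal_ne_top]
      congr 1
      by_cases hx : x ∈ F.supp d j
      · simp only [Set.indicator_of_mem hx, Pi.one_apply, one_mul]
        rw [← lintegral_indicator (F.measurableSet_supp k)]
        refine lintegral_congr fun y => ?_
        by_cases hy : y ∈ F.supp d k <;> simp [hy]
      · simp [hx]
    rw [heq, ENNReal.ofReal_mul (mul_nonneg (hA j) (hA k)), mul_left_comm]
    gcongr
    refine h _ (F.R_pos j) _ (F.R_pos k) _ (F.ε_pos j) _ (F.ε_pos k) (F.ε_le j) (F.ε_le k) ?_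
    by_cases hjk : j = k
    · exact Or.inl (by rw [hjk])
    · exact Or.inr (F.separated j k hjk)
  have hsum : 0 ≤ ∑ j, ∑ k, F.A j ^ q * F.A k ^ q * ((F.R j ^ d * F.ε j) * (F.R k ^ d * F.ε k) *
      max (F.R j) (F.R k) ^ (α - d)) :=
    Finset.sum_nonneg fun j _ => Finset.sum_nonneg fun k _ => hterm j k
  refine (le_toReal_mul_of_enorm_le hC hsum ?_).trans
    (mul_le_mul_of_nonneg_right (by linarith) hsum)
  calc ‖coulombEnergy d q α (F.total d)‖ₑ
      ≤ ∫⁻ x, ∫⁻ y, ‖|F.total d x| ^ q * |F.total d y| ^ q / ‖x - y‖ ^ ((d : ℝ) - α)‖ₑ :=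
        (enorm_integral_le_lintegral_enorm _).trans
          (lintegral_mono fun x => enorm_integral_le_lintegral_enorm _)
    _ ≤ ∫⁻ x, ∫⁻ y, ∑ j, ∑ k, t j k x y := lintegral_mono fun x => lintegral_mono fun y => hpt x y
    _ = ∑ j, ∑ k, ∫⁻ x, ∫⁻ y, t j k x y := by
        have hin (j k x) : Measurable (t j k x) := (htm j k).of_uncurry_left
        have hout (j k) : Measurable fun x => ∫⁻ y, t j k x y := (htm j k).lintegral_prod_right'
        have h1 (x) : ∫⁻ y, ∑ j, ∑ k, t j k x y = ∑ j, ∑ k, ∫⁻ y, t j k x y := by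
          rw [lintegral_finsetSum _ fun j _ => Finset.measurable_fun_sum _ fun k _ => hin j k x]
          exact Finset.sum_congr rfl fun j _ => lintegral_finsetSum _ fun k _ => hin j k x
        rw [lintegral_congr h1,
          lintegral_finsetSum _ fun j _ => Finset.measurable_fun_sum _ fun k _ => hout j k]
        exact Finset.sum_congr rfl fun j _ => lintegral_finsetSum _ fun k _ => hout j k
    _ ≤ _ := by
        rw [ENNReal.ofReal_sum_of_nonneg fun j _ => Finset.sum_nonneg fun k _ => hterm j k,
          Finset.mul_sum]
        refine Finset.sum_le_sum fun j _ => ?_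
        rw [ENNReal.ofReal_sum_of_nonneg fun k _ => hterm j k, Finset.mul_sum]
        exact Finset.sum_le_sum fun k _ => hint j k

lemma exists_sobolevSemi_total_le {d : ℕ} (hd : 2 ≤ d) {s p : ℝ} (hs0 : 0 < s) (hs1 : s ≤ 1)
    (hp : 1 ≤ p) :
    ∃ C > (0 : ℝ), ∀ {ι : Type} [Fintype ι] (F : ShellFamily ι),
      0 ≤ sobolevSemi d s p (F.total d) ∧ sobolevSemi d s p (F.total d) ≤
        (C * ∑ k, F.A k ^ p * F.R k ^ ((d : ℝ) - s * p) * F.ε k ^ (1 - s * p)) ^ (1 / p) := by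
  have hp0 : 0 < p := by linarith
  have hterm {ι : Type} (F : ShellFamily ι) (k : ι) :
      0 ≤ F.A k ^ p * F.R k ^ ((d : ℝ) - s * p) * F.ε k ^ (1 - s * p) := by
    have := F.R_pos k; have := F.ε_pos k; have := F.A_pos k
    positivity
  rcases eq_or_lt_of_le hs1 with rfl | hs
  · obtain ⟨V, hV, hvol⟩ := exists_volume_shellSet_le hd
    obtain ⟨L, hL1, hL⟩ := exists_norm_fderiv_radialShell_le
    refine ⟨(ENNReal.ofReal (L ^ p) * V).toReal + 1, by positivity, fun {ι} _ F => ?_⟩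
    have hsum := Finset.sum_nonneg fun k (_ : k ∈ Finset.univ) => hterm F k
    rw [sobolevSemi, if_pos rfl]
    have hnn : 0 ≤ ∫ x, ‖fderiv ℝ (F.total d) x‖ ^ p := integral_nonneg fun x => by positivity
    refine ⟨by positivity, Real.rpow_le_rpow hnn ?_ (by positivity)⟩
    refine (le_toReal_mul_of_enorm_le (C := ENNReal.ofReal (L ^ p) * V) (by finiteness)
      hsum ?_).trans (mul_le_mul_of_nonneg_right (by linarith) hsum)
    have hb (k : ι) : 0 ≤ (F.A k * (L / (F.ε k * F.R k))) ^ p := by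
      have := F.R_pos k; have := F.ε_pos k; have := F.A_pos k
      positivity
    calc ‖∫ x, ‖fderiv ℝ (F.total d) x‖ ^ p‖ₑ
        ≤ ∫⁻ x, ‖‖fderiv ℝ (F.total d) x‖ ^ p‖ₑ := enorm_integral_le_lintegral_enorm _
      _ ≤ ∫⁻ x, ∑ k, (F.supp d k).indicator
            (fun _ => ENNReal.ofReal ((F.A k * (L / (F.ε k * F.R k))) ^ p)) x := by
          refine lintegral_mono fun x => ?_
          rw [Real.enorm_of_nonneg (by positivity)]
          refine (ENNReal.ofReal_le_ofReal (F.norm_fderiv_total_rpow_le hp0 (fun k x =>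
            hL d _ (F.A_pos k).le _ (F.R_pos k) _ (F.ε_pos k) (F.ε_le k) x)
            (by linarith) x)).trans ?_
          rw [ENNReal.ofReal_sum_of_nonneg fun k _ =>
            Set.indicator_nonneg (fun _ _ => hb k) x]
          refine Finset.sum_le_sum fun k _ => ?_
          by_cases hx : x ∈ F.supp d k <;> simp [hx]
      _ = ∑ k, ENNReal.ofReal ((F.A k * (L / (F.ε k * F.R k))) ^ p) * volume (F.supp d k) := by
          rw [lintegral_finsetSum _ fun k _ => measurable_const.indicator (F.measurableSet_supp k)]
          exact Finset.sum_congr rfl fun k _ =>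
            lintegral_indicator_const (F.measurableSet_supp k) _
      _ ≤ _ := by
          rw [ENNReal.ofReal_sum_of_nonneg fun k _ => hterm F k, Finset.mul_sum]
          refine Finset.sum_le_sum fun k _ => ?_
          have hR := F.R_pos k
          have hε := F.ε_pos k
          have hA := F.A_pos k
          refine (mul_le_mul_right (hvol _ hR _ (F.ε_le k)) _).trans (le_of_eq ?_)
          rw [mul_left_comm, mul_comm (ENNReal.ofReal (L ^ p)) V, mul_assoc,
            ← ENNReal.ofReal_mul (by positivity), ← ENNReal.ofReal_mul (by positivity)]
          congr 2
          rw [one_mul, Real.rpow_sub hR, Real.rpow_sub hε, Real.mul_rpow hA.le (by positivity),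
            Real.div_rpow (by positivity) (by positivity), Real.mul_rpow hε.le hR.le,
            Real.rpow_natCast, Real.rpow_one]
          field_simp
  · obtain ⟨C, hC, h⟩ := exists_lintegral_lintegral_radialShell_le hd hs0 hs hp0
    refine ⟨(ENNReal.ofReal (2 ^ (p - 1)) * C).toReal + 1, by positivity, fun {ι} _ F => ?_⟩
    have hsum := Finset.sum_nonneg fun k (_ : k ∈ Finset.univ) => hterm F k
    rw [sobolevSemi, if_neg hs.ne, if_neg hs0.ne']
    have hnn : 0 ≤ ∫ x, ∫ y, |F.total d x - F.total d y| ^ p / ‖x - y‖ ^ ((d : ℝ) + s * p) :=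
      integral_nonneg fun x => integral_nonneg fun y => by positivity
    refine ⟨by positivity, Real.rpow_le_rpow hnn ?_ (by positivity)⟩
    refine (le_toReal_mul_of_enorm_le (C := ENNReal.ofReal (2 ^ (p - 1)) * C) (by finiteness)
      hsum ?_).trans (mul_le_mul_of_nonneg_right (by linarith) hsum)
    set t : ι → EuclideanSpace ℝ (Fin d) → EuclideanSpace ℝ (Fin d) → ENNReal := fun k x y =>
      ENNReal.ofReal (|F.shell d k x - F.shell d k y| ^ p / ‖x - y‖ ^ ((d : ℝ) + s * p)) with ht
    have htm (k) : Measurable (Function.uncurry (t k)) := by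
      have := (F.contDiff_shell (d := d) k).continuous.measurable
      rw [ht]
      unfold Function.uncurry
      fun_prop
    calc ‖∫ x, ∫ y, |F.total d x - F.total d y| ^ p / ‖x - y‖ ^ ((d : ℝ) + s * p)‖ₑ
        ≤ ∫⁻ x, ∫⁻ y, ‖|F.total d x - F.total d y| ^ p / ‖x - y‖ ^ ((d : ℝ) + s * p)‖ₑ :=
          (enorm_integral_le_lintegral_enorm _).trans
            (lintegral_mono fun x => enorm_integral_le_lintegral_enorm _)
      _ ≤ ∫⁻ x, ∫⁻ y, ENNReal.ofReal (2 ^ (p - 1)) * ∑ k, t k x y := by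
          refine lintegral_mono fun x => lintegral_mono fun y => ?_
          rw [Real.enorm_of_nonneg (by positivity), ht]
          simp only
          rw [← ENNReal.ofReal_sum_of_nonneg fun k _ => by positivity,
            ← ENNReal.ofReal_mul (by positivity), ← Finset.sum_div, ← mul_div_assoc]
          refine ENNReal.ofReal_le_ofReal ?_
          gcongr
          exact F.abs_total_sub_rpow_le hp x y
      _ = ENNReal.ofReal (2 ^ (p - 1)) * ∑ k, ∫⁻ x, ∫⁻ y, t k x y := by
          have hin (k x) : Measurable (t k x) := (htm k).of_uncurry_left
          have hout (k) : Measurable fun x => ∫⁻ y, t k x y := (htm k).lintegral_prod_right'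
          have h1 (x) : ∫⁻ y, ENNReal.ofReal (2 ^ (p - 1)) * ∑ k, t k x y =
              ENNReal.ofReal (2 ^ (p - 1)) * ∑ k, ∫⁻ y, t k x y := by
            rw [lintegral_const_mul' _ _ ENNReal.ofReal_ne_top,
              lintegral_finsetSum _ fun k _ => hin k x]
          rw [lintegral_congr h1, lintegral_const_mul' _ _ ENNReal.ofReal_ne_top,
            lintegral_finsetSum _ fun k _ => hout k]
      _ ≤ _ := by
          rw [ENNReal.ofReal_sum_of_nonneg fun k _ => hterm F k, mul_assoc, Finset.mul_sum _ _ C]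
          gcongr with k
          exact h _ (F.A_pos k).le _ (F.R_pos k) _ (F.ε_pos k) (F.ε_le k)

end ShellFamily

/-- On superpositions of shells the interpolation inequality becomes an inequality between sums. -/
lemma ShellFamily.exists_sum_rpow_le {d : ℕ} (hd : 2 ≤ d) {s γ p q α β₁ β₂ : ℝ} (hs0 : 0 < s)
    (hs1 : s ≤ 1) (hγ : 0 < γ) (hp : 1 ≤ p) (hq : 0 < q) (hα1 : 1 < α) (hαd : α ≤ d)
    (hβ₁ : 0 < β₁) (hβ₂ : 0 < β₂)
    (h : ∃ C > 0, ∀ g : EuclideanSpace ℝ (Fin d) → ℝ,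
      (∀ x y : EuclideanSpace ℝ (Fin d), ‖x‖ = ‖y‖ → g x = g y) →
      ContDiff ℝ 1 g → HasCompactSupport g →
      (∫ x, |g x| ^ γ) ^ (1 / γ) ≤
        C * sobolevSemi d s p g ^ (β₁ * p) * coulombEnergy d q α g ^ β₂) :
    ∃ K > 0, ∀ {ι : Type} [Fintype ι] (F : ShellFamily ι),
      (∑ k, F.A k ^ γ * (F.R k ^ d * F.ε k)) ^ (1 / γ) ≤
        K * (∑ k, F.A k ^ p * F.R k ^ ((d : ℝ) - s * p) * F.ε k ^ (1 - s * p)) ^ β₁ *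
          (∑ j, ∑ k, F.A j ^ q * F.A k ^ q * ((F.R j ^ d * F.ε j) * (F.R k ^ d * F.ε k) *
            max (F.R j) (F.R k) ^ (α - d))) ^ β₂ := by
  obtain ⟨C, hC, h⟩ := h
  obtain ⟨c, hc, hlow⟩ := exists_le_integral_rpow_total hd hγ
  obtain ⟨E, hE, hen⟩ := exists_coulombEnergy_total_le hd hq hα1 hαd
  obtain ⟨S, hS, hsob⟩ := exists_sobolevSemi_total_le hd hs0 hs1 hp
  refine ⟨C * S ^ β₁ * E ^ β₂ / c ^ (1 / γ), by positivity, fun {ι} _ F => ?_⟩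
  have hF := h (F.total d) (fun x y hxy => F.total_eq_of_norm_eq hxy) F.contDiff_total
    F.hasCompactSupport_total
  have hen0 : 0 ≤ coulombEnergy d q α (F.total d) :=
    integral_nonneg fun x => integral_nonneg fun y => by positivity
  have hp0 : 0 < p := by linarith
  have hA := F.A_pos
  have hR := F.R_pos
  have hε := F.ε_pos
  set X := ∑ k, F.A k ^ γ * (F.R k ^ d * F.ε k) with hX
  set Y := ∑ k, F.A k ^ p * F.R k ^ ((d : ℝ) - s * p) * F.ε k ^ (1 - s * p) with hY
  set Z := ∑ j, ∑ k, F.A j ^ q * F.A k ^ q * ((F.R j ^ d * F.ε j) * (F.R k ^ d * F.ε k) *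
            max (F.R j) (F.R k) ^ (α - d)) with hZ
  have hX0 : 0 ≤ X := Finset.sum_nonneg fun k _ => by
    have := hA k; have := hR k; have := hε k; positivity
  have hY0 : 0 ≤ Y := Finset.sum_nonneg fun k _ => by
    have := hA k; have := hR k; have := hε k; positivity
  have hZ0 : 0 ≤ Z := by
    have := hen0.trans (hen F)
    exact nonneg_of_mul_nonneg_right this hE
  have hcX : c ^ (1 / γ) * X ^ (1 / γ) ≤ C * (S * Y) ^ β₁ * (E * Z) ^ β₂ := by
    calc c ^ (1 / γ) * X ^ (1 / γ) = (c * X) ^ (1 / γ) := (Real.mul_rpow hc.le hX0).symm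
      _ ≤ (∫ x, |F.total d x| ^ γ) ^ (1 / γ) :=
          Real.rpow_le_rpow (by positivity) (hlow F) (by positivity)
      _ ≤ C * sobolevSemi d s p (F.total d) ^ (β₁ * p) *
            coulombEnergy d q α (F.total d) ^ β₂ := hF
      _ ≤ C * ((S * Y) ^ (1 / p)) ^ (β₁ * p) * (E * Z) ^ β₂ := by
          have h1 := (hsob F).1
          have h2 := (hsob F).2
          have h3 := hen F
          gcongr
      _ = C * (S * Y) ^ β₁ * (E * Z) ^ β₂ := by
          rw [← Real.rpow_mul (by positivity)]
          congr 3
          field_simp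
  rw [Real.mul_rpow hS.le hY0, Real.mul_rpow hE.le hZ0] at hcX
  rw [div_mul_eq_mul_div, div_mul_eq_mul_div, le_div_iff₀ (by positivity)]
  linarith

/-- A family of shells with parameters on a curve `t ↦ (exp (t * a), exp (t * ρ), exp (t * D))`
and radii as far apart as desired. -/
lemma ShellFamily.exists_exp (N : ℕ) (a : ℝ) {ρ D m : ℝ} (hρ : ρ ≠ 0) (hD : D ≠ 0) (hm : 0 < m)
    {δ : ℝ} (hδ : 0 < δ) :
    ∃ (F : ShellFamily (Fin N)) (t : Fin N → ℝ),
      (∀ k, F.A k = exp (t k * a)) ∧ (∀ k, F.R k = exp (t k * ρ)) ∧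
      (∀ k, F.ε k = exp (t k * D)) ∧
      ∀ j k, j ≠ k → exp (-(m * |t j * ρ - t k * ρ|)) ≤ δ := by
  have hDρ : 0 < |D| * |ρ| := mul_pos (abs_pos.2 hD) (abs_pos.2 hρ)
  obtain ⟨T, ⟨⟨hT1, hT2⟩, hT3⟩, hT0⟩ :=
    ((((Filter.tendsto_id.atTop_mul_const (sq_pos_of_ne_zero hD)).eventually_ge_atTop
      (log 2)).and ((Filter.tendsto_id.atTop_mul_const hDρ).eventually_ge_atTop (log 4))).and
      ((Filter.tendsto_id.atTop_mul_const (mul_pos hm hDρ)).eventually_ge_atTop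
        (-log δ))).and (Filter.eventually_gt_atTop 0) |>.exists
  simp only [id] at hT1 hT2 hT3
  set t : Fin N → ℝ := fun k => -(((k : ℕ) : ℝ) + 1) * T * D with ht
  have hdist (j k : Fin N) (hjk : j ≠ k) : T * (|D| * |ρ|) ≤ |t j * ρ - t k * ρ| := by
    have h1 : t j * ρ - t k * ρ = (((k : ℕ) : ℝ) - (j : ℕ)) * (T * (D * ρ)) := by
      rw [ht]; ring
    have h2 : (1 : ℝ) ≤ |((k : ℕ) : ℝ) - (j : ℕ)| := by
      have : (1 : ℤ) ≤ |((k : ℕ) : ℤ) - (j : ℕ)| := by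
        exact Int.one_le_abs (sub_ne_zero.2 fun h => hjk (Fin.ext (by omega)))
      exact_mod_cast this
    rw [h1, abs_mul, abs_mul, abs_mul, abs_of_pos hT0]
    exact le_mul_of_one_le_left (by positivity) h2
  refine ⟨⟨fun k => exp (t k * a), fun k => exp (t k * ρ), fun k => exp (t k * D),
    fun k => exp_pos _, fun k => exp_pos _, fun k => exp_pos _, fun k => ?_, fun j k hjk => ?_⟩,
    t, fun k => rfl, fun k => rfl, fun k => rfl, fun j k hjk => ?_⟩
  · rw [← Real.le_log_iff_exp_le (by norm_num), one_div, Real.log_inv]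
    have h1 : t k * D = -((((k : ℕ) : ℝ) + 1) * (T * D ^ 2)) := by rw [ht]; ring
    have h2 : T * D ^ 2 ≤ (((k : ℕ) : ℝ) + 1) * (T * D ^ 2) :=
      le_mul_of_one_le_left (by positivity) (by linarith [Nat.cast_nonneg (α := ℝ) (k : ℕ)])
    linarith
  · have h4 : exp (log 4) = 4 := Real.exp_log (by norm_num)
    have h := hT2.trans (hdist j k hjk)
    rw [← h4, ← Real.exp_add, ← Real.exp_add, Real.exp_le_exp, Real.exp_le_exp]
    rcases le_abs.1 h with h | h
    · exact Or.inr (by linarith)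
    · exact Or.inl (by linarith)
  · rw [← Real.le_log_iff_exp_le hδ]
    have := mul_le_mul_of_nonneg_left (hdist j k hjk) hm.le
    linarith

theorem stmt3 (d : ℕ) (hd : 2 ≤ d) (s γ p q α β₁ β₂ : ℝ)
    (hs0 : 0 < s) (hs1 : s ≤ 1) (hγ1 : 1 < γ) (hp1 : 1 ≤ p) (hq1 : 1 ≤ q)
    (hα1 : 1 < α) (hαd : α < d) (hβ₁ : 0 < β₁) (hβ₂ : 0 < β₂)
    (heq1 : β₁ * p + 2 * β₂ * q = 1)
    (heq2 : ((d : ℝ) - s * p) * β₁ + ((d : ℝ) + α) * β₂ = d / γ)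
    (hD : p * ((d : ℝ) + α) - 2 * q * ((d : ℝ) - s * p) ≠ 0)
    (hcon : β₁ * γ + ((d : ℝ) + α - 2) / ((d : ℝ) - 1) * (β₂ * γ) < 1 ∨
      (β₁ * γ + ((d : ℝ) + α - 2) / ((d : ℝ) - 1) * (β₂ * γ) = 1 ∧
        q * (1 - s * p) ≠ p)) :
    ¬ ∃ C > 0, ∀ g : EuclideanSpace ℝ (Fin d) → ℝ,
      (∀ x y : EuclideanSpace ℝ (Fin d), ‖x‖ = ‖y‖ → g x = g y) →
      ContDiff ℝ 1 g → HasCompactSupport g →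
      (∫ x, |g x| ^ γ) ^ (1 / γ) ≤
        C * sobolevSemi d s p g ^ (β₁ * p) * coulombEnergy d q α g ^ β₂ := by
  intro hC
  have hγ : 0 < γ := by linarith
  have hd1 : (0 : ℝ) < (d : ℝ) - 1 := by
    have : (2 : ℝ) ≤ d := by exact_mod_cast hd
    linarith
  obtain ⟨K, hK, h⟩ := ShellFamily.exists_sum_rpow_le hd hs0 hs1 hγ hp1 (by linarith) hα1 hαd.le
    hβ₁ hβ₂ hC
  have hscale : β₁ * γ + ((d : ℝ) + α - 2) / ((d : ℝ) - 1) * (β₂ * γ) =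
      1 + γ / ((d : ℝ) - 1) * (1 / γ - ((1 - s * p) * β₁ + 2 * β₂)) := by
    field_simp at heq2 ⊢
    linear_combination heq2
  rcases hcon with hlt | ⟨heq, hρ⟩
  · have hexp : 0 < (1 - s * p) * β₁ + 2 * β₂ - 1 / γ := by
      by_contra! hle
      have : 0 ≤ γ / ((d : ℝ) - 1) * (1 / γ - ((1 - s * p) * β₁ + 2 * β₂)) :=
        mul_nonneg (by positivity) (by linarith)
      linarith
    have hlim : Filter.Tendsto
        (fun ε : ℝ => K * ε ^ ((1 - s * p) * β₁ + 2 * β₂ - 1 / γ)) (nhdsWithin 0 (Set.Ioi 0))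
        (nhds 0) := by
      have := ((Real.continuousAt_rpow_const 0 _ (Or.inr hexp.le)).tendsto.const_mul K).mono_left
        (nhdsWithin_le_nhds (s := Set.Ioi (0 : ℝ)))
      rwa [Real.zero_rpow hexp.ne', mul_zero] at this
    obtain ⟨ε, hsmall, hε0, hε1⟩ := ((hlim.eventually_lt_const one_pos).and
      (Ioc_mem_nhdsGT (show (0 : ℝ) < 1 / 2 by norm_num))).exists
    have hF := h (ι := Unit) ⟨fun _ => 1, fun _ => 1, fun _ => ε, fun _ => one_pos,
      fun _ => one_pos, fun _ => hε0, fun _ => hε1, fun j k hjk => absurd rfl hjk⟩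
    simp only [Finset.univ_unique, Finset.sum_singleton, Real.one_rpow, one_pow, one_mul,
      max_self, mul_one] at hF
    rw [← sq, ← Real.rpow_natCast, ← Real.rpow_mul hε0.le, ← Real.rpow_mul hε0.le, mul_assoc,
      ← Real.rpow_add hε0] at hF
    rw [Real.rpow_sub hε0, ← mul_div_assoc, div_lt_one (by positivity)] at hsmall
    push_cast at hF
    linarith
  · set a : ℝ := 2 * ((d : ℝ) - s * p) - (1 - s * p) * ((d : ℝ) + α) with ha
    set ρ : ℝ := 2 * (q * (1 - s * p) - p) with hρdef
    set D : ℝ := p * ((d : ℝ) + α) - 2 * q * ((d : ℝ) - s * p) with hDdef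
    set m : ℝ := ((d : ℝ) - α) / 2 with hmdef
    have hm : 0 < m := by rw [hmdef]; linarith
    have hρ0 : ρ ≠ 0 := mul_ne_zero two_ne_zero (sub_ne_zero.2 hρ)
    have hwidth : (1 - s * p) * β₁ + 2 * β₂ = 1 / γ := by
      have : γ / ((d : ℝ) - 1) * (1 / γ - ((1 - s * p) * β₁ + 2 * β₂)) = 0 := by linarith
      rcases mul_eq_zero.1 this with h0 | h0
      · exact absurd h0 (by positivity)
      · linarith
    have hsob : a * p + ρ * ((d : ℝ) - s * p) + D * (1 - s * p) = 0 := by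
      rw [ha, hρdef, hDdef]; ring
    have hen : a * q + ρ * d + D = m * ρ := by
      rw [ha, hρdef, hDdef, hmdef]; ring
    have hLγ : a * γ + ρ * d + D = 0 := by
      have h1 : a * (2 * q) + ρ * ((d : ℝ) + α) + D * 2 = 0 := by
        rw [ha, hρdef, hDdef]; ring
      have h2 : γ * (((d : ℝ) - s * p) * β₁ + ((d : ℝ) + α) * β₂) = d := by
        rw [heq2]; field_simp
      have h3 : γ * ((1 - s * p) * β₁ + 2 * β₂) = 1 := by
        rw [hwidth]; field_simp
      linear_combination γ * β₁ * hsob + γ * β₂ * h1 - a * γ * heq1 - ρ * h2 - D * h3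
    have hexp : 0 < 1 / γ - (β₁ + β₂) := by
      refine pos_of_mul_pos_right (a := (d : ℝ) - 1) ?_ hd1.le
      rw [div_eq_mul_one_div] at heq2
      have : ((d : ℝ) - 1) * (1 / γ - (β₁ + β₂)) = (α - 1) * β₂ := by
        linear_combination hwidth - heq2
      rw [this]
      exact mul_pos (by linarith) hβ₂
    have hbound (N : ℕ) (hN : 0 < N) :
        (N : ℝ) ^ (1 / γ - (β₁ + β₂)) ≤ K * 2 ^ β₂ := by
      have hN' : (0 : ℝ) < N := by exact_mod_cast hN
      obtain ⟨F, t, hA, hR, hε, hsep⟩ := ShellFamily.exists_exp N a hρ0 hD hm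
        (inv_pos.2 hN')
      have h1 (k : Fin N) : F.A k ^ γ * (F.R k ^ d * F.ε k) = 1 := by
        rw [hA, hR, hε, ← Real.exp_mul, ← Real.exp_nat_mul, ← Real.exp_add, ← Real.exp_add,
          Real.exp_eq_one_iff]
        linear_combination t k * hLγ
      have h2 (k : Fin N) :
          F.A k ^ p * F.R k ^ ((d : ℝ) - s * p) * F.ε k ^ (1 - s * p) = 1 := by
        rw [hA, hR, hε, ← Real.exp_mul, ← Real.exp_mul, ← Real.exp_mul, ← Real.exp_add,
          ← Real.exp_add, Real.exp_eq_one_iff]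
        linear_combination t k * hsob
      have h3 (j k : Fin N) : F.A j ^ q * F.A k ^ q * ((F.R j ^ d * F.ε j) *
          (F.R k ^ d * F.ε k) * max (F.R j) (F.R k) ^ (α - d)) =
          exp (-(m * |t j * ρ - t k * ρ|)) := by
        have hmax : max (F.R j) (F.R k) = exp (max (t j * ρ) (t k * ρ)) := by
          rw [hR, hR, Real.exp_monotone.map_max]
        have hmid : max (t j * ρ) (t k * ρ) =
            (t j * ρ + t k * ρ + |t j * ρ - t k * ρ|) / 2 := by
          rcases le_total (t j * ρ) (t k * ρ) with hjk | hjk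
          · rw [max_eq_right hjk, abs_of_nonpos (sub_nonpos.2 hjk)]; ring
          · rw [max_eq_left hjk, abs_of_nonneg (sub_nonneg.2 hjk)]; ring
        rw [hmax, hA, hA, hR, hR, hε, hε, ← Real.exp_mul, ← Real.exp_mul, ← Real.exp_mul,
          ← Real.exp_nat_mul, ← Real.exp_nat_mul, ← Real.exp_add, ← Real.exp_add,
          ← Real.exp_add, ← Real.exp_add, ← Real.exp_add, ← Real.exp_add, Real.exp_eq_exp,
          hmid]
        linear_combination (t j + t k) * hen +
          (t j * ρ + t k * ρ + |t j * ρ - t k * ρ|) * hmdef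
      have h4 (j k : Fin N) : exp (-(m * |t j * ρ - t k * ρ|)) ≤
          (if j = k then 1 else 0) + (N : ℝ)⁻¹ := by
        split_ifs with hjk
        · simp [hjk]
        · simpa using hsep j k hjk
      have h5 : ∑ j, ∑ k, exp (-(m * |t j * ρ - t k * ρ|)) ≤ 2 * (N : ℝ) := by
        calc ∑ j, ∑ k, exp (-(m * |t j * ρ - t k * ρ|))
            ≤ ∑ j : Fin N, ∑ k : Fin N, ((if j = k then 1 else 0) + (N : ℝ)⁻¹) :=
              Finset.sum_le_sum fun j _ => Finset.sum_le_sum fun k _ => h4 j k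
          _ = 2 * (N : ℝ) := by
              simp [Finset.sum_add_distrib, hN'.ne']
              ring
      have hF := h F
      simp only [h1, h2, h3, Finset.sum_const, Finset.card_univ, Fintype.card_fin, nsmul_eq_mul,
        mul_one] at hF
      have h6 : (∑ j, ∑ k, exp (-(m * |t j * ρ - t k * ρ|))) ^ β₂ ≤ (2 * (N : ℝ)) ^ β₂ :=
        Real.rpow_le_rpow (Finset.sum_nonneg fun j _ => Finset.sum_nonneg fun k _ =>
          (Real.exp_pos _).le) h5 hβ₂.le
      rw [Real.mul_rpow two_pos.le hN'.le] at h6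
      rw [Real.rpow_sub hN', div_le_iff₀ (by positivity), Real.rpow_add hN']
      calc (N : ℝ) ^ (1 / γ) ≤ _ := hF
        _ ≤ K * (N : ℝ) ^ β₁ * (2 ^ β₂ * (N : ℝ) ^ β₂) := by gcongr
        _ = _ := by ring
    have hlim := (tendsto_rpow_atTop hexp).comp tendsto_natCast_atTop_atTop
    obtain ⟨N, hN, hN0⟩ := ((hlim.eventually_gt_atTop (K * 2 ^ β₂)).and
      (Filter.eventually_gt_atTop 0)).exists
    exact absurd (hbound N hN0) (not_le.2 hN)
end

section
/- Let d ≥ 2, 0 < s ≤ 1, 1 < γ < ∞, 1 ≤ p, q < ∞, 0 < α ≤ 1, and 0 < β₁, β₂ < ∞ be such that β₁p + 2β₂q = 1 and (d − sp)β₁ + (d + α)β₂ = d/γ, and 𝒟 = p(d+α) − 2q(d−sp) ≠ 0. Assume β₁γ + β₂γ < 1. Then there is NO constant C > 0 such that ‖g‖_{L^γ(ℝ^d)} ≤ C ‖g‖_{Ẇ^{s,p}(ℝ^d)}^{β₁p} ( ∫_{ℝ^d}∫_{ℝ^d} |g(x)|^q |g(y)|^q / |x−y|^{d−α} dx dy )^{β₂}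 holds for all radial g ∈ C¹_{c,rad}(ℝ^d). -/
open MeasureTheory Real

section Shell

open Module Set Metric

variable {E : Type*} [NormedAddCommGroup E] [NormedSpace ℝ E] [FiniteDimensional ℝ E]
  [MeasurableSpace E] [BorelSpace E] (μ : Measure E) [μ.IsAddHaarMeasure]

/-- The closed shell of radius `R` and thickness `2`. -/
def shell (E : Type*) [NormedAddCommGroup E] (R : ℝ) : Set E := {x | ‖x‖ ∈ Icc (R - 1) (R + 1)}

omit [NormedSpace ℝ E] [FiniteDimensional ℝ E] in
lemma measurableSet_shell (R : ℝ) : MeasurableSet (shell E R) :=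
  measurable_norm measurableSet_Icc

lemma lintegral_comp_smul_of_pos_s4 {F : E → ENNReal} (hF : Measurable F) {t : ℝ} (ht : 0 < t) :
    ∫⁻ y, F (t • y) ∂μ = ENNReal.ofReal ((t ^ finrank ℝ E)⁻¹) * ∫⁻ v, F v ∂μ := by
  rw [← lintegral_map hF (measurable_const_smul t), Measure.map_addHaar_smul μ ht.ne',
    lintegral_smul_measure, abs_of_pos (by positivity), smul_eq_mul]

omit [MeasurableSpace E] [BorelSpace E] in
lemma lintegral_dilation_parameter_le {R : ℝ} (hR : 2 ≤ R) [Nontrivial E] (v : E) :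
    ∫⁻ t in Ici (1 : ℝ), ENNReal.ofReal ((t ^ finrank ℝ E)⁻¹) *
      (shell E R).indicator 1 (t⁻¹ • v) ≤ ENNReal.ofReal (4 / R) := by
  rcases eq_or_ne v 0 with rfl | hv
  · have : (0 : E) ∉ shell E R := by simp [shell]; intro h; linarith
    simp [this]
  have hv' : 0 < ‖v‖ := norm_pos_iff.2 hv
  have hd : finrank ℝ E ≠ 0 := finrank_pos.ne'
  calc ∫⁻ t in Ici (1 : ℝ), ENNReal.ofReal ((t ^ finrank ℝ E)⁻¹) *
        (shell E R).indicator 1 (t⁻¹ • v)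
      ≤ ∫⁻ t in Ici (1 : ℝ), (Icc (‖v‖ / (R + 1)) (‖v‖ / (R - 1))).indicator
          (fun _ ↦ ENNReal.ofReal ((R + 1) / ‖v‖)) t := by
        refine setLIntegral_mono' measurableSet_Ici fun t (ht : 1 ≤ t) ↦ ?_
        have ht0 : 0 < t := by linarith
        by_cases h : t⁻¹ • v ∈ shell E R
        · have h' := h
          simp only [shell, mem_ofPred_eq, norm_smul, norm_inv, Real.norm_eq_abs, abs_of_pos ht0,
            mem_Icc] at h'
          rw [inv_mul_eq_div, le_div_iff₀ ht0, div_le_iff₀ ht0] at h'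
          have h1 : ‖v‖ / (R + 1) ≤ t := by
            rw [div_le_iff₀ (by linarith)]; linarith
          have h2 : t ≤ ‖v‖ / (R - 1) := by
            rw [le_div_iff₀ (by linarith)]; linarith
          rw [indicator_of_mem h, indicator_of_mem (show t ∈ Icc _ _ from ⟨h1, h2⟩)]
          simp only [Pi.one_apply, mul_one]
          refine ENNReal.ofReal_le_ofReal ?_
          rw [← inv_div]
          exact inv_anti₀ (by positivity) (h1.trans (le_self_pow₀ ht hd))
        · simp [h]
    _ ≤ ∫⁻ t, (Icc (‖v‖ / (R + 1)) (‖v‖ / (R - 1))).indicator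
          (fun _ ↦ ENNReal.ofReal ((R + 1) / ‖v‖)) t := setLIntegral_le_lintegral _ _
    _ = ENNReal.ofReal (2 / (R - 1)) := by
        rw [lintegral_indicator_const measurableSet_Icc, Real.volume_Icc,
          ← ENNReal.ofReal_mul (by positivity)]
        congr 1
        have : R - 1 ≠ 0 := by linarith
        have : R + 1 ≠ 0 := by linarith
        field_simp
        ring
    _ ≤ ENNReal.ofReal (4 / R) := by
        refine ENNReal.ofReal_le_ofReal ?_
        rw [div_le_div_iff₀ (by linarith) (by linarith)]
        linarith

/-- Averaging a function over dilations of a thin shell gains a factor `R⁻¹`. -/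
lemma lintegral_shell_dilation_le [Nontrivial E] {F : E → ENNReal} (hF : Measurable F) {R : ℝ}
    (hR : 2 ≤ R) :
    ∫⁻ y in shell E R, (∫⁻ t in Ici (1 : ℝ), F (t • y)) ∂μ ≤
      ENNReal.ofReal (4 / R) * ∫⁻ v, F v ∂μ := by
  have hS := measurableSet_shell (E := E) R
  have hI : Measurable ((shell E R).indicator (1 : E → ENNReal)) := measurable_one.indicator hS
  have hm : Measurable fun z : E × ℝ ↦ F (z.2 • z.1) :=
    hF.comp (measurable_snd.smul measurable_fst)
  calc ∫⁻ y in shell E R, (∫⁻ t in Ici (1 : ℝ), F (t • y)) ∂μ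
      = ∫⁻ t in Ici (1 : ℝ), ∫⁻ y in shell E R, F (t • y) ∂μ :=
        lintegral_lintegral_swap hm.aemeasurable
    _ = ∫⁻ t in Ici (1 : ℝ), ∫⁻ v, ENNReal.ofReal ((t ^ finrank ℝ E)⁻¹) *
          (shell E R).indicator 1 (t⁻¹ • v) * F v ∂μ := by
        refine setLIntegral_congr_fun measurableSet_Ici fun t (ht : 1 ≤ t) ↦ ?_
        have ht0 : 0 < t := by linarith
        have hG : Measurable fun v ↦ (shell E R).indicator 1 (t⁻¹ • v) * F v :=
          (hI.comp (measurable_const_smul _)).mul hF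
        simp_rw [mul_assoc]
        rw [lintegral_const_mul _ hG, ← lintegral_comp_smul_of_pos_s4 μ hG ht0,
          ← lintegral_indicator hS]
        refine lintegral_congr fun y ↦ ?_
        rw [inv_smul_smul₀ ht0.ne']
        by_cases hy : y ∈ shell E R <;> simp [hy]
    _ = ∫⁻ v, (∫⁻ t in Ici (1 : ℝ), ENNReal.ofReal ((t ^ finrank ℝ E)⁻¹) *
          (shell E R).indicator 1 (t⁻¹ • v) * F v) ∂μ := by
        refine lintegral_lintegral_swap (Measurable.aemeasurable ?_)
        refine Measurable.mul (Measurable.mul (by fun_prop) (hI.comp ?_)) (hF.comp measurable_snd)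
        exact measurable_fst.inv.smul measurable_snd
    _ ≤ ∫⁻ v, ENNReal.ofReal (4 / R) * F v ∂μ := by
        refine lintegral_mono fun v ↦ ?_
        rw [lintegral_mul_const]
        · gcongr
          exact lintegral_dilation_parameter_le hR v
        · refine Measurable.mul (by fun_prop) (hI.comp ?_)
          exact measurable_inv.smul_const v
    _ = ENNReal.ofReal (4 / R) * ∫⁻ v, F v ∂μ := lintegral_const_mul _ hF

omit [FiniteDimensional ℝ E] [MeasurableSpace E] [BorelSpace E] in
lemma one_add_norm_rpow_le_lintegral {r R : ℝ} (hr : 0 ≤ r) (hR : 2 ≤ R) (x : E) {y : E}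
    (hy : y ∈ shell E R) :
    ENNReal.ofReal ((1 + ‖x - y‖) ^ (-r)) ≤ ENNReal.ofReal (R * 3 ^ (r + 1)) *
      ∫⁻ t in Ici (1 : ℝ), ENNReal.ofReal ((1 + ‖x - t • y‖) ^ (-(r + 1))) := by
  set a := 1 + ‖x - y‖ with ha
  have ha1 : 1 ≤ a := by simp [ha]
  have hR0 : 0 < R := by linarith
  have key : ∀ t ∈ Icc 1 (1 + a / R), 1 + ‖x - t • y‖ ≤ 3 * a := by
    rintro t ⟨h1, h2⟩
    have h3 : ‖x - t • y‖ ≤ ‖x - y‖ + (t - 1) * ‖y‖ := by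
      calc ‖x - t • y‖ = ‖(x - y) - (t - 1) • y‖ := by congr 1; module
        _ ≤ ‖x - y‖ + ‖(t - 1) • y‖ := norm_sub_le _ _
        _ = _ := by rw [norm_smul, Real.norm_eq_abs, abs_of_nonneg (by linarith)]
    have h4 : ‖y‖ ≤ 2 * R := hy.2.trans (by linarith)
    have h5 : (t - 1) * ‖y‖ ≤ a / R * (2 * R) :=
      mul_le_mul (by linarith) h4 (norm_nonneg _) (by positivity)
    have h6 : a / R * (2 * R) = 2 * a := by field_simp
    linarith
  have low : ENNReal.ofReal ((3 * a) ^ (-(r + 1)) * (a / R)) ≤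
      ∫⁻ t in Ici (1 : ℝ), ENNReal.ofReal ((1 + ‖x - t • y‖) ^ (-(r + 1))) := by
    calc ENNReal.ofReal ((3 * a) ^ (-(r + 1)) * (a / R))
        = ∫⁻ t in Icc 1 (1 + a / R), ENNReal.ofReal ((3 * a) ^ (-(r + 1))) := by
          rw [setLIntegral_const, Real.volume_Icc, add_sub_cancel_left,
            ENNReal.ofReal_mul (by positivity)]
      _ ≤ ∫⁻ t in Icc 1 (1 + a / R), ENNReal.ofReal ((1 + ‖x - t • y‖) ^ (-(r + 1))) := by
          refine setLIntegral_mono' measurableSet_Icc fun t ht ↦ ENNReal.ofReal_le_ofReal ?_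
          exact rpow_le_rpow_of_nonpos (by positivity) (key t ht) (by linarith)
      _ ≤ _ := lintegral_mono_set Icc_subset_Ici_self
  refine le_trans (le_of_eq ?_) (mul_le_mul_right low _)
  rw [← ENNReal.ofReal_mul (by positivity)]
  congr 1
  rw [mul_rpow (by norm_num) (by positivity), rpow_neg (x := 3) (by norm_num),
    show -r = -(r + 1) + 1 by ring, rpow_add_one (by positivity)]
  field_simp

lemma integrable_ite_norm_rpow [Nontrivial E] {a b : ℝ} (ha : -(finrank ℝ E : ℝ) < a)
    (hb : b < -(finrank ℝ E : ℝ)) :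
    Integrable (fun z : E ↦ if ‖z‖ ≤ 1 then ‖z‖ ^ a else ‖z‖ ^ b) μ := by
  rw [integrable_fun_norm_addHaar μ (f := fun t ↦ if t ≤ 1 then t ^ a else t ^ b),
    ← Ioc_union_Ioi_eq_Ioi zero_le_one]
  have hd : 1 ≤ finrank ℝ E := finrank_pos
  have pow (t c : ℝ) (ht : 0 < t) :
      t ^ (finrank ℝ E - 1) * t ^ c = t ^ ((finrank ℝ E : ℝ) - 1 + c) := by
    rw [rpow_add ht, ← rpow_natCast, Nat.cast_sub hd, Nat.cast_one]
  refine IntegrableOn.union ?_ ?_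
  · have h : IntegrableOn (fun t : ℝ ↦ t ^ ((finrank ℝ E : ℝ) - 1 + a)) (Ioc 0 1) := by
      rw [← intervalIntegrable_iff_integrableOn_Ioc_of_le zero_le_one]
      exact intervalIntegral.intervalIntegrable_rpow' (by linarith)
    refine h.congr_fun (fun t ht ↦ ?_) measurableSet_Ioc
    simp [ht.2, pow t a ht.1]
  · have h := integrableOn_Ioi_rpow_of_lt
      (show (finrank ℝ E : ℝ) - 1 + b < -1 by linarith) one_pos
    refine h.congr_fun (fun t (ht : 1 < t) ↦ ?_) measurableSet_Ioi
    simp [ht.not_ge, pow t b (by linarith)]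

/-- Riesz potentials of order `< 1` of thin shells are bounded uniformly in the radius. -/
lemma exists_lintegral_shell_rpow_le [Nontrivial E] {r : ℝ} (hr : (finrank ℝ E : ℝ) - 1 < r)
    (hr' : r < finrank ℝ E) :
    ∃ C : ℝ, 0 ≤ C ∧ ∀ R, 2 ≤ R → ∀ x : E,
      ∫⁻ y in shell E R, ENNReal.ofReal (‖x - y‖ ^ (-r)) ∂μ ≤ ENNReal.ofReal C := by
  have hd : (1 : ℝ) ≤ finrank ℝ E := by exact_mod_cast finrank_pos (R := ℝ) (M := E)
  set K : E → ℝ := fun z ↦ if ‖z‖ ≤ 1 then ‖z‖ ^ (-r) else ‖z‖ ^ (-(finrank ℝ E : ℝ) - 1)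
  have hK : Integrable K μ := integrable_ite_norm_rpow μ (by linarith) (by linarith)
  have hK0 : ∀ z, 0 ≤ K z := fun z ↦ by simp only [K]; split_ifs <;> positivity
  set J : E → ℝ := fun z ↦ (1 + ‖z‖) ^ (-(r + 1))
  have hJ : Integrable J μ := integrable_one_add_norm (by linarith)
  have hJ0 : ∀ z, 0 ≤ J z := fun z ↦ by positivity
  have hIK : 0 ≤ ∫ z, K z ∂μ := integral_nonneg hK0
  have hIJ : 0 ≤ ∫ z, J z ∂μ := integral_nonneg hJ0
  refine ⟨∫ z, K z ∂μ + 2 ^ r * (4 * 3 ^ (r + 1)) * ∫ z, J z ∂μ, by positivity, fun R hR x ↦ ?_⟩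
  have hR0 : 0 < R := by linarith
  have hpt (z : E) : ‖z‖ ^ (-r) ≤ K z + 2 ^ r * (1 + ‖z‖) ^ (-r) := by
    by_cases h : ‖z‖ ≤ 1
    · simp only [K, h, if_true]
      exact le_add_of_nonneg_right (by positivity)
    · have h' : (1 + ‖z‖) / 2 ≤ ‖z‖ := by linarith [not_le.1 h]
      refine le_trans ?_ (le_add_of_nonneg_left (hK0 z))
      calc ‖z‖ ^ (-r) ≤ ((1 + ‖z‖) / 2) ^ (-r) :=
            rpow_le_rpow_of_nonpos (by positivity) h' (by linarith)
        _ = 2 ^ r * (1 + ‖z‖) ^ (-r) := by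
            rw [div_rpow (by positivity) (by norm_num), rpow_neg (x := 2) (by norm_num)]
            field_simp
  have hJm : Measurable fun z ↦ ENNReal.ofReal (J z) := by simp only [J]; fun_prop
  have hKm : AEMeasurable (fun y ↦ ENNReal.ofReal (K (x - y))) μ :=
    (hK.comp_sub_left x).aemeasurable.ennreal_ofReal
  have h1 : ∫⁻ y in shell E R, ENNReal.ofReal (K (x - y)) ∂μ ≤ ENNReal.ofReal (∫ z, K z ∂μ) := by
    refine (setLIntegral_le_lintegral _ _).trans (le_of_eq ?_)
    rw [← ofReal_integral_eq_lintegral_ofReal (hK.comp_sub_left x)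
      (Filter.Eventually.of_forall fun y ↦ hK0 _), integral_sub_left_eq_self]
  have h2 : ∫⁻ y in shell E R, ENNReal.ofReal ((1 + ‖x - y‖) ^ (-r)) ∂μ ≤
      ENNReal.ofReal (4 * 3 ^ (r + 1) * ∫ z, J z ∂μ) := by
    have hmeas : Measurable fun v ↦ ENNReal.ofReal (J (x - v)) :=
      hJm.comp (measurable_const.sub measurable_id)
    calc ∫⁻ y in shell E R, ENNReal.ofReal ((1 + ‖x - y‖) ^ (-r)) ∂μ
        ≤ ∫⁻ y in shell E R, ENNReal.ofReal (R * 3 ^ (r + 1)) *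
            (∫⁻ t in Ici (1 : ℝ), ENNReal.ofReal (J (x - t • y))) ∂μ :=
          setLIntegral_mono' (measurableSet_shell R) fun y hy ↦
            one_add_norm_rpow_le_lintegral (by linarith) hR x hy
      _ = ENNReal.ofReal (R * 3 ^ (r + 1)) * ∫⁻ y in shell E R,
            (∫⁻ t in Ici (1 : ℝ), ENNReal.ofReal (J (x - t • y))) ∂μ :=
          lintegral_const_mul' _ _ ENNReal.ofReal_ne_top
      _ ≤ ENNReal.ofReal (R * 3 ^ (r + 1)) * (ENNReal.ofReal (4 / R) *
            ∫⁻ v, ENNReal.ofReal (J (x - v)) ∂μ) := by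
          gcongr
          exact lintegral_shell_dilation_le μ hmeas hR
      _ = ENNReal.ofReal (4 * 3 ^ (r + 1) * ∫ z, J z ∂μ) := by
          rw [← ofReal_integral_eq_lintegral_ofReal (hJ.comp_sub_left x)
            (Filter.Eventually.of_forall fun y ↦ hJ0 _), integral_sub_left_eq_self,
            ← ENNReal.ofReal_mul (by positivity), ← ENNReal.ofReal_mul (by positivity)]
          congr 1
          field_simp
  calc ∫⁻ y in shell E R, ENNReal.ofReal (‖x - y‖ ^ (-r)) ∂μ
      ≤ ∫⁻ y in shell E R, (ENNReal.ofReal (K (x - y)) +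
          ENNReal.ofReal (2 ^ r) * ENNReal.ofReal ((1 + ‖x - y‖) ^ (-r))) ∂μ := by
        refine lintegral_mono fun y ↦ ?_
        rw [← ENNReal.ofReal_mul (by positivity), ← ENNReal.ofReal_add (hK0 _) (by positivity)]
        exact ENNReal.ofReal_le_ofReal (hpt _)
    _ = ∫⁻ y in shell E R, ENNReal.ofReal (K (x - y)) ∂μ + ENNReal.ofReal (2 ^ r) *
          ∫⁻ y in shell E R, ENNReal.ofReal ((1 + ‖x - y‖) ^ (-r)) ∂μ := by
        rw [lintegral_add_left' hKm.restrict, lintegral_const_mul' _ _ ENNReal.ofReal_ne_top]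
    _ ≤ ENNReal.ofReal (∫ z, K z ∂μ) + ENNReal.ofReal (2 ^ r) *
          ENNReal.ofReal (4 * 3 ^ (r + 1) * ∫ z, J z ∂μ) := by gcongr
    _ = _ := by
        rw [← ENNReal.ofReal_mul (by positivity), ← ENNReal.ofReal_add hIK (by positivity),
          mul_assoc (2 ^ r)]

end Shell

section ShellFunction

open Module Set Metric

variable {E : Type*} [NormedAddCommGroup E] [NormedSpace ℝ E] [FiniteDimensional ℝ E]
  [MeasurableSpace E] [BorelSpace E] (μ : Measure E) [μ.IsAddHaarMeasure]

omit [NormedSpace ℝ E] [FiniteDimensional ℝ E] [MeasurableSpace E] [BorelSpace E] in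
lemma isClosed_shell (R : ℝ) : IsClosed (shell E R) := isClosed_Icc.preimage continuous_norm

lemma measureReal_norm_mem_Icc {a b : ℝ} (ha : 0 < a) (hab : a ≤ b) :
    μ.real {x : E | ‖x‖ ∈ Icc a b} =
      (b ^ finrank ℝ E - a ^ finrank ℝ E) * μ.real (ball (0 : E) 1) := by
  have h : {x : E | ‖x‖ ∈ Icc a b} = closedBall 0 b \ ball 0 a := by
    ext x; simp [and_comm]
  have hball : μ.real (ball (0 : E) a) = a ^ finrank ℝ E * μ.real (ball (0 : E) 1) := by
    rw [measureReal_def, Measure.addHaar_ball_of_pos μ 0 ha, ENNReal.toReal_mul,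
      ENNReal.toReal_ofReal (by positivity), measureReal_def]
  rw [h, measureReal_sdiff (ball_subset_closedBall.trans (closedBall_subset_closedBall hab))
    measurableSet_ball measure_closedBall_lt_top.ne,
    Measure.addHaar_real_closedBall μ 0 (ha.le.trans hab), hball]
  ring

omit [BorelSpace E] in
lemma measure_shell_lt_top (R : ℝ) : μ (shell E R) < ⊤ := by
  refine (measure_mono fun x hx ↦ ?_).trans_lt
    (measure_closedBall_lt_top (x := (0 : E)) (r := R + 1))
  simpa using hx.2

lemma exists_measureReal_shell_le [Nontrivial E] :
    ∃ C : ℝ, 0 < C ∧ ∀ R, 2 ≤ R → μ.real (shell E R) ≤ C * R ^ ((finrank ℝ E : ℝ) - 1) := by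
  have hc : 0 < μ.real (ball (0 : E) 1) :=
    ENNReal.toReal_pos (measure_ball_pos μ 0 one_pos).ne' measure_ball_lt_top.ne
  obtain ⟨n, hn⟩ : ∃ n, finrank ℝ E = n + 1 := Nat.exists_eq_succ_of_ne_zero finrank_pos.ne'
  refine ⟨2 * (n + 1) * 2 ^ n * μ.real (ball (0 : E) 1), by positivity, fun R hR ↦ ?_⟩
  rw [shell, measureReal_norm_mem_Icc μ (by linarith) (by linarith), hn]
  push_cast
  rw [add_sub_cancel_right, rpow_natCast]
  have h1 : (R + 1) ^ (n + 1) - (R - 1) ^ (n + 1) ≤ 2 * (n + 1) * (R + 1) ^ n := by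
    have h := abs_pow_sub_pow_le (R + 1) (R - 1) (n + 1)
    rw [abs_of_pos (by linarith : 0 < R + 1), abs_of_pos (by linarith : 0 < R - 1),
      max_eq_left (by linarith)] at h
    have h2 : |R + 1 - (R - 1)| = 2 := by norm_num
    rw [h2] at h
    simpa using (le_abs_self _).trans h
  have h2 : (R + 1) ^ n ≤ (2 * R) ^ n := pow_le_pow_left₀ (by linarith) (by linarith) n
  calc _ ≤ 2 * (n + 1) * (2 * R) ^ n * μ.real (ball (0 : E) 1) := by
        gcongr
        exact h1.trans (by gcongr)
    _ = _ := by rw [mul_pow]; ring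

lemma exists_le_measureReal_inner_shell [Nontrivial E] :
    ∃ c : ℝ, 0 < c ∧ ∀ R, 2 ≤ R → c * R ^ ((finrank ℝ E : ℝ) - 1) ≤
      μ.real {x : E | ‖x‖ ∈ Icc (R - 1 / 2) (R + 1 / 2)} := by
  have hc : 0 < μ.real (ball (0 : E) 1) :=
    ENNReal.toReal_pos (measure_ball_pos μ 0 one_pos).ne' measure_ball_lt_top.ne
  obtain ⟨n, hn⟩ : ∃ n, finrank ℝ E = n + 1 := Nat.exists_eq_succ_of_ne_zero finrank_pos.ne'
  refine ⟨μ.real (ball (0 : E) 1), hc, fun R hR ↦ ?_⟩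
  rw [measureReal_norm_mem_Icc μ (by linarith) (by linarith), hn]
  push_cast
  rw [add_sub_cancel_right, rpow_natCast, mul_comm]
  have h1 : (R - 1 / 2) ^ n ≤ (R + 1 / 2) ^ n := pow_le_pow_left₀ (by linarith) (by linarith) n
  have h2 : R ^ n ≤ (R + 1 / 2) ^ n := pow_le_pow_left₀ (by linarith) (by linarith) n
  gcongr
  rw [pow_succ, pow_succ]
  have h3 : (R - 1 / 2) ^ n * (R - 1 / 2) ≤ (R + 1 / 2) ^ n * (R - 1 / 2) :=
    mul_le_mul_of_nonneg_right h1 (by linarith)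
  linarith

/-- A radial `C¹` cutoff adapted to a thin shell: it vanishes off the shell, equals `1` on its
middle half and is `L`-Lipschitz. -/
structure IsShellCutoff (L : NNReal) (R : ℝ) (g : E → ℝ) : Prop where
  radial : ∀ x y, ‖x‖ = ‖y‖ → g x = g y
  contDiff : ContDiff ℝ 1 g
  lipschitz : LipschitzWith L g
  nonneg : ∀ x, 0 ≤ g x
  le_one : ∀ x, g x ≤ 1
  eq_zero : ∀ x ∉ shell E R, g x = 0
  eq_one : ∀ x, ‖x‖ ∈ Icc (R - 1 / 2) (R + 1 / 2) → g x = 1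

omit [MeasurableSpace E] [BorelSpace E] in
lemma IsShellCutoff.hasCompactSupport {L : NNReal} {R : ℝ} {g : E → ℝ}
    (hg : IsShellCutoff L R g) : HasCompactSupport g := by
  refine HasCompactSupport.intro (K := shell E R) ?_ hg.eq_zero
  refine (isCompact_closedBall (0 : E) (R + 1)).of_isClosed_subset (isClosed_shell R) fun x hx ↦ ?_
  simpa using hx.2

lemma exists_isShellCutoff (E : Type*) [NormedAddCommGroup E] [InnerProductSpace ℝ E] :
    ∃ L : NNReal, ∀ R, 2 ≤ R → ∃ g : E → ℝ, IsShellCutoff L R g := by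
  let φ : ContDiffBump (0 : ℝ) := ⟨1 / 2, 1, by norm_num, by norm_num⟩
  obtain ⟨L, hL⟩ := ContDiff.lipschitzWith_of_hasCompactSupport (𝕂 := ℝ) (n := 1)
    φ.hasCompactSupport φ.contDiff one_ne_zero
  have hzero (t : ℝ) (ht : 1 ≤ |t|) : φ t = 0 := φ.zero_of_le_dist (by simpa using ht)
  refine ⟨L, fun R hR ↦ ⟨fun x ↦ φ (‖x‖ - R), ?_, ?_, ?_, ?_, ?_, ?_, ?_⟩⟩
  · intro x y h
    simp only [h]
  · rw [contDiff_iff_contDiffAt]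
    intro x
    rcases eq_or_ne x 0 with rfl | hx
    · refine (contDiffAt_const (c := (0 : ℝ))).congr_of_eventuallyEq ?_
      filter_upwards [ball_mem_nhds (0 : E) one_pos] with y hy
      have hy' : ‖y‖ < 1 := by simpa using hy
      exact hzero _ (by rw [abs_of_neg (by linarith)]; linarith)
    · exact φ.contDiff.contDiffAt.comp x ((contDiffAt_norm ℝ hx).sub contDiffAt_const)
  · refine LipschitzWith.of_dist_le_mul fun x y ↦ (hL.dist_le_mul _ _).trans ?_
    gcongr
    rw [dist_sub_right, Real.dist_eq, dist_eq_norm]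
    exact abs_norm_sub_norm_le x y
  · exact fun x ↦ φ.nonneg
  · exact fun x ↦ φ.le_one
  · intro x hx
    refine hzero _ ?_
    by_contra! h
    rw [abs_lt] at h
    exact hx ⟨by linarith, by linarith⟩
  · intro x hx
    refine φ.one_of_mem_closedBall ?_
    rw [mem_closedBall, Real.dist_eq, sub_zero]
    exact abs_le.2 ⟨by simp only [φ]; linarith [hx.1], by simp only [φ]; linarith [hx.2]⟩

omit [FiniteDimensional ℝ E] [MeasurableSpace E] [BorelSpace E] in
lemma IsShellCutoff.abs_sub_rpow_div_le {L : NNReal} {R : ℝ} {g : E → ℝ}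
    (hg : IsShellCutoff L R g) {p a : ℝ} (hp : 1 ≤ p) (x y : E) :
    |g x - g y| ^ p / ‖x - y‖ ^ a ≤
      max 1 ((L : ℝ) ^ p) * ((shell E R).indicator 1 x + (shell E R).indicator 1 y) *
        if ‖x - y‖ ≤ 1 then ‖x - y‖ ^ (p - a) else ‖x - y‖ ^ (-a) := by
  have hp0 : 0 < p := by linarith
  have hi (z : E) : (0 : ℝ) ≤ (shell E R).indicator 1 z := indicator_nonneg (by simp) z
  rcases eq_or_ne x y with rfl | hxy
  · simp only [sub_self, abs_zero, zero_rpow hp0.ne', zero_div]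
    have := hi x
    split_ifs <;> positivity
  have hn : 0 < ‖x - y‖ := norm_pos_iff.2 (sub_ne_zero.2 hxy)
  by_cases hz : x ∉ shell E R ∧ y ∉ shell E R
  · simp [hg.eq_zero x hz.1, hg.eq_zero y hz.2, hz.1, hz.2, zero_rpow hp0.ne']
  have hI : (1 : ℝ) ≤ (shell E R).indicator 1 x + (shell E R).indicator 1 y := by
    by_cases hx : x ∈ shell E R
    · simpa [hx] using hi y
    · have hy : y ∈ shell E R := by tauto
      simpa [hy] using hi x
  have hpre : max 1 ((L : ℝ) ^ p) ≤
      max 1 ((L : ℝ) ^ p) * ((shell E R).indicator 1 x + (shell E R).indicator 1 y) :=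
    le_mul_of_one_le_right (by positivity) hI
  split_ifs with h
  · have h1 : |g x - g y| ≤ L * ‖x - y‖ := by
      simpa [Real.dist_eq, dist_eq_norm] using hg.lipschitz.dist_le_mul x y
    calc |g x - g y| ^ p / ‖x - y‖ ^ a ≤ (L * ‖x - y‖) ^ p / ‖x - y‖ ^ a := by gcongr
      _ = (L : ℝ) ^ p * ‖x - y‖ ^ (p - a) := by
          rw [mul_rpow (by positivity) (by positivity), rpow_sub hn, mul_div_assoc]
      _ ≤ _ := by
          gcongr
          exact (le_max_right _ _).trans hpre
  · have h1 : |g x - g y| ≤ 1 := by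
      rw [abs_le]
      constructor <;> linarith [hg.nonneg x, hg.nonneg y, hg.le_one x, hg.le_one y]
    calc |g x - g y| ^ p / ‖x - y‖ ^ a ≤ 1 / ‖x - y‖ ^ a := by
          gcongr
          exact rpow_le_one (abs_nonneg _) h1 hp0.le
      _ = 1 * ‖x - y‖ ^ (-a) := by rw [rpow_neg hn.le, one_mul, one_div]
      _ ≤ _ := by
          gcongr
          exact (le_max_left _ _).trans hpre

/-- The Gagliardo energy of a shell cutoff is at most a constant times the volume of the shell. -/
lemma exists_gagliardo_le [Nontrivial E] (L : NNReal) {s p : ℝ} (hs0 : 0 < s) (hs1 : s < 1)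
    (hp : 1 ≤ p) :
    ∃ C : ℝ, 0 ≤ C ∧ ∀ R, 2 ≤ R → ∀ g : E → ℝ, IsShellCutoff L R g →
      ∫ x, ∫ y, |g x - g y| ^ p / ‖x - y‖ ^ ((finrank ℝ E : ℝ) + s * p) ∂μ ∂μ ≤
        C * μ.real (shell E R) := by
  set a := (finrank ℝ E : ℝ) + s * p with ha
  set K : E → ℝ := fun z ↦ if ‖z‖ ≤ 1 then ‖z‖ ^ (p - a) else ‖z‖ ^ (-a)
  have hp0 : 0 < p := by linarith
  have hsp : 0 < s * p := by positivity
  have hsp' : s * p < p := by nlinarith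
  have hK : Integrable K μ := integrable_ite_norm_rpow μ (by linarith) (by linarith)
  have hK0 : ∀ z, 0 ≤ K z := fun z ↦ by simp only [K]; split_ifs <;> positivity
  have hIK : 0 ≤ ∫ z, K z ∂μ := integral_nonneg hK0
  set M := max 1 ((L : ℝ) ^ p)
  have hM : 0 ≤ M := by positivity
  refine ⟨2 * M * ∫ z, K z ∂μ, by positivity, fun R hR g hg ↦ ?_⟩
  have hS := measurableSet_shell (E := E) R
  set χ : E → ℝ := (shell E R).indicator 1
  have hχ : Integrable χ μ := (integrable_indicator_iff hS).2
    (integrableOn_const (measure_shell_lt_top μ R).ne)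
  have hχI : ∫ x, χ x ∂μ = μ.real (shell E R) := integral_indicator_one hS
  have hχK (x : E) : Integrable (fun y ↦ χ y * K (x - y)) μ := by
    refine ((hK.comp_sub_left x).indicator hS).congr (Filter.Eventually.of_forall fun y ↦ ?_)
    by_cases hy : y ∈ shell E R <;> simp [χ, hy]
  let Λ := ContinuousLinearMap.mul ℝ ℝ
  have hconv : Integrable (fun x ↦ ∫ y, χ y * K (x - y) ∂μ) μ :=
    Integrable.integrable_convolution Λ hχ hK
  have hconvI : ∫ x, ∫ y, χ y * K (x - y) ∂μ ∂μ = μ.real (shell E R) * ∫ z, K z ∂μ := by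
    rw [← hχI]
    exact integral_convolution Λ hχ hK
  have hinner (x : E) : ∫ y, |g x - g y| ^ p / ‖x - y‖ ^ a ∂μ ≤
      M * (χ x * ∫ z, K z ∂μ + ∫ y, χ y * K (x - y) ∂μ) := by
    have hint : Integrable (fun y ↦ M * (χ x * K (x - y) + χ y * K (x - y))) μ :=
      (((hK.comp_sub_left x).const_mul _).add (hχK x)).const_mul M
    refine (integral_mono_of_nonneg (Filter.Eventually.of_forall fun y ↦ by positivity) hint
      (Filter.Eventually.of_forall fun y ↦ ?_)).trans (le_of_eq ?_)
    · refine (hg.abs_sub_rpow_div_le hp x y).trans (le_of_eq ?_)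
      simp only [M, χ, K]
      ring
    · rw [integral_const_mul, integral_add ((hK.comp_sub_left x).const_mul _) (hχK x),
        integral_const_mul, integral_sub_left_eq_self]
  have hint : Integrable (fun x ↦ M * (χ x * ∫ z, K z ∂μ + ∫ y, χ y * K (x - y) ∂μ)) μ :=
    ((hχ.mul_const _).add hconv).const_mul M
  refine (integral_mono_of_nonneg (Filter.Eventually.of_forall fun x ↦
    integral_nonneg fun y ↦ by positivity) hint
      (Filter.Eventually.of_forall hinner)).trans (le_of_eq ?_)
  rw [integral_const_mul, integral_add (hχ.mul_const _) hconv, integral_mul_const, hχI, hconvI]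
  ring

lemma IsShellCutoff.integral_norm_fderiv_le {L : NNReal} {R : ℝ} {g : E → ℝ}
    (hg : IsShellCutoff L R g) {p : ℝ} (hp : 1 ≤ p) :
    ∫ x, ‖fderiv ℝ g x‖ ^ p ∂μ ≤ (L : ℝ) ^ p * μ.real (shell E R) := by
  have hp0 : 0 < p := by linarith
  have hS := measurableSet_shell (E := E) R
  have hint : Integrable ((shell E R).indicator fun _ ↦ (L : ℝ) ^ p) μ :=
    (integrable_indicator_iff hS).2 (integrableOn_const (measure_shell_lt_top μ R).ne)
  refine (integral_mono_of_nonneg (Filter.Eventually.of_forall fun x ↦ by positivity) hint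
    (Filter.Eventually.of_forall fun x ↦ ?_)).trans (le_of_eq ?_)
  · by_cases hx : x ∈ shell E R
    · simp only [hx, indicator_of_mem]
      gcongr
      exact norm_fderiv_le_of_lipschitz ℝ hg.lipschitz
    · have h0 : g =ᶠ[nhds x] fun _ ↦ 0 := by
        filter_upwards [(isClosed_shell R).isOpen_compl.mem_nhds hx] with y hy
        exact hg.eq_zero y hy
      simp [hx, h0.fderiv_eq, zero_rpow hp0.ne']
  · rw [integral_indicator_const _ hS, smul_eq_mul, mul_comm]

/-- The Coulomb energy of a shell cutoff is almost linear in the volume of the shell. -/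
lemma exists_coulomb_le [Nontrivial E] (L : NNReal) {q α ε : ℝ} (hq : 1 ≤ q) (hε : 0 ≤ ε)
    (hε0 : ε < α) (hε1 : α - ε < 1)
    (hα : α < finrank ℝ E) :
    ∃ C : ℝ, 0 ≤ C ∧ ∀ R, 2 ≤ R → ∀ g : E → ℝ, IsShellCutoff L R g →
      ∫ x, ∫ y, |g x| ^ q * |g y| ^ q / ‖x - y‖ ^ ((finrank ℝ E : ℝ) - α) ∂μ ∂μ ≤
        C * R ^ ε * μ.real (shell E R) := by
  set r := (finrank ℝ E : ℝ) - α + ε with hr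
  obtain ⟨C, hC0, hC⟩ := exists_lintegral_shell_rpow_le μ (r := r) (by linarith) (by linarith)
  refine ⟨C * 4 ^ ε, by positivity, fun R hR g hg ↦ ?_⟩
  have hR0 : 0 < R := by linarith
  have hq0 : 0 < q := by linarith
  have hS := measurableSet_shell (E := E) R
  have hle (x : E) : |g x| ^ q ≤ 1 :=
    rpow_le_one (abs_nonneg _) (abs_le.2 ⟨by linarith [hg.nonneg x], hg.le_one x⟩) hq0.le
  have hm (x : E) : Measurable fun y : E ↦ ‖x - y‖ ^ (-r) := by fun_prop
  have hnn (x : E) : 0 ≤ᵐ[μ.restrict (shell E R)] fun y ↦ ‖x - y‖ ^ (-r) :=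
    Filter.Eventually.of_forall fun y ↦ by positivity
  have hpot (x : E) : IntegrableOn (fun y ↦ ‖x - y‖ ^ (-r)) (shell E R) μ := by
    refine ⟨(hm x).aestronglyMeasurable, ?_⟩
    rw [hasFiniteIntegral_iff_ofReal (hnn x)]
    exact (hC R hR x).trans_lt ENNReal.ofReal_lt_top
  have hpotI (x : E) : ∫ y in shell E R, ‖x - y‖ ^ (-r) ∂μ ≤ C := by
    rw [integral_eq_lintegral_of_nonneg_ae (hnn x) (hm x).aestronglyMeasurable]
    exact ENNReal.toReal_le_of_le_ofReal hC0 (hC R hR x)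
  have hinner (x : E) (hx : x ∈ shell E R) :
      ∫ y, |g x| ^ q * |g y| ^ q / ‖x - y‖ ^ ((finrank ℝ E : ℝ) - α) ∂μ ≤ C * 4 ^ ε * R ^ ε := by
    have hint : Integrable ((shell E R).indicator fun y ↦ (4 * R) ^ ε * ‖x - y‖ ^ (-r)) μ :=
      (integrable_indicator_iff hS).2 ((hpot x).const_mul _)
    refine (integral_mono_of_nonneg (Filter.Eventually.of_forall fun y ↦ by positivity) hint
      (Filter.Eventually.of_forall fun y ↦ ?_)).trans ?_
    · by_cases hy : y ∈ shell E R
      · simp only [hy, indicator_of_mem]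
        rcases (norm_nonneg (x - y)).eq_or_lt' with h | h
        · rw [h, zero_rpow (sub_pos.2 hα).ne', div_zero]
          positivity
        · have h1 : ‖x - y‖ ≤ 4 * R := by
            linarith [norm_sub_le x y, hx.2, hy.2]
          calc |g x| ^ q * |g y| ^ q / ‖x - y‖ ^ ((finrank ℝ E : ℝ) - α)
              ≤ 1 / ‖x - y‖ ^ ((finrank ℝ E : ℝ) - α) := by
                gcongr
                exact mul_le_one₀ (hle x) (by positivity) (hle y)
            _ = ‖x - y‖ ^ ε * ‖x - y‖ ^ (-r) := by
                rw [← rpow_add h, one_div, ← rpow_neg h.le]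
                congr 1
                rw [hr]; ring
            _ ≤ (4 * R) ^ ε * ‖x - y‖ ^ (-r) := by gcongr
      · simp [hy, hg.eq_zero y hy, zero_rpow hq0.ne']
    · rw [integral_indicator hS, integral_const_mul, mul_rpow (by norm_num) hR0.le]
      calc 4 ^ ε * R ^ ε * ∫ y in shell E R, ‖x - y‖ ^ (-r) ∂μ ≤ 4 ^ ε * R ^ ε * C := by
            gcongr
            exact hpotI x
        _ = _ := by ring
  have hint : Integrable ((shell E R).indicator fun _ ↦ C * 4 ^ ε * R ^ ε) μ :=
    (integrable_indicator_iff hS).2 (integrableOn_const (measure_shell_lt_top μ R).ne)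
  refine (integral_mono_of_nonneg (Filter.Eventually.of_forall fun x ↦
    integral_nonneg fun y ↦ by positivity) hint
      (Filter.Eventually.of_forall fun x ↦ ?_)).trans (le_of_eq ?_)
  · by_cases hx : x ∈ shell E R
    · simpa only [hx, indicator_of_mem] using hinner x hx
    · simp [hx, hg.eq_zero x hx, zero_rpow hq0.ne']
  · rw [integral_indicator_const _ hS, smul_eq_mul, mul_comm]

lemma IsShellCutoff.measureReal_le_integral {L : NNReal} {R : ℝ} {g : E → ℝ}
    (hg : IsShellCutoff L R g) {γ : ℝ} (hγ : 0 < γ) :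
    μ.real {x : E | ‖x‖ ∈ Icc (R - 1 / 2) (R + 1 / 2)} ≤ ∫ x, |g x| ^ γ ∂μ := by
  have hT : MeasurableSet {x : E | ‖x‖ ∈ Icc (R - 1 / 2) (R + 1 / 2)} :=
    measurable_norm measurableSet_Icc
  rw [← integral_indicator_one hT]
  have hcont : Continuous fun x ↦ |g x| ^ γ :=
    (hg.contDiff.continuous.abs).rpow_const fun _ ↦ Or.inr hγ.le
  refine integral_mono_of_nonneg
    (Filter.Eventually.of_forall fun x ↦ indicator_nonneg (by simp) x)
    (hcont.integrable_of_hasCompactSupport ?_) (Filter.Eventually.of_forall fun x ↦ ?_)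
  · exact hg.hasCompactSupport.comp_left (g := fun t : ℝ ↦ |t| ^ γ) (by simp [zero_rpow hγ.ne'])
  · by_cases hx : x ∈ {x : E | ‖x‖ ∈ Icc (R - 1 / 2) (R + 1 / 2)}
    · simp only [indicator_of_mem hx, hg.eq_one x hx, Pi.one_apply, abs_one, one_rpow, le_refl]
    · rw [indicator_of_notMem hx]
      positivity

end ShellFunction

lemma exists_sobolevSemi_le {d : ℕ} (hd : 0 < d) (L : NNReal) {s p : ℝ} (hs0 : 0 < s)
    (hs1 : s ≤ 1) (hp : 1 ≤ p) :
    ∃ C : ℝ, 0 ≤ C ∧ ∀ R, 2 ≤ R → ∀ g : EuclideanSpace ℝ (Fin d) → ℝ, IsShellCutoff L R g →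
      sobolevSemi d s p g ≤
        (C * volume.real (shell (EuclideanSpace ℝ (Fin d)) R)) ^ (1 / p) := by
  have hp0 : 0 < p := by linarith
  have : Nontrivial (EuclideanSpace ℝ (Fin d)) :=
    Module.nontrivial_of_finrank_pos (R := ℝ) (by simpa using hd)
  rcases hs1.eq_or_lt with rfl | hs
  · refine ⟨(L : ℝ) ^ p, by positivity, fun R hR g hg ↦ ?_⟩
    rw [sobolevSemi, if_pos rfl]
    exact rpow_le_rpow (integral_nonneg fun x ↦ by positivity)
      (hg.integral_norm_fderiv_le volume hp) (by positivity)
  · obtain ⟨C, hC0, hC⟩ := exists_gagliardo_le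
      (volume : Measure (EuclideanSpace ℝ (Fin d))) L hs0 hs hp
    refine ⟨C, hC0, fun R hR g hg ↦ ?_⟩
    rw [sobolevSemi, if_neg hs.ne, if_neg hs0.ne']
    rw [finrank_euclideanSpace_fin] at hC
    exact rpow_le_rpow (integral_nonneg fun x ↦ integral_nonneg fun y ↦ by positivity)
      (hC R hR g hg) (by positivity)

lemma not_forall_rpow_le {κ M : ℝ} (hκ : 0 < κ) : ¬ ∀ R : ℝ, 2 ≤ R → R ^ κ ≤ M := by
  intro h
  obtain ⟨R, hR, hR2⟩ := (((tendsto_rpow_atTop hκ).eventually_gt_atTop M).and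
    (Filter.eventually_ge_atTop 2)).exists
  exact absurd (h R hR2) (not_le.2 hR)

theorem stmt4 (d : ℕ) (hd : 2 ≤ d) (s γ p q α β₁ β₂ : ℝ)
    (hs0 : 0 < s) (hs1 : s ≤ 1) (hγ1 : 1 < γ) (hp1 : 1 ≤ p) (hq1 : 1 ≤ q)
    (hα0 : 0 < α) (hα1 : α ≤ 1) (hβ₁ : 0 < β₁) (hβ₂ : 0 < β₂)
    (heq1 : β₁ * p + 2 * β₂ * q = 1)
    (heq2 : ((d : ℝ) - s * p) * β₁ + ((d : ℝ) + α) * β₂ = d / γ)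
    (hD : p * ((d : ℝ) + α) - 2 * q * ((d : ℝ) - s * p) ≠ 0)
    (hcon : β₁ * γ + β₂ * γ < 1) :
    ¬ ∃ C > 0, ∀ g : EuclideanSpace ℝ (Fin d) → ℝ,
      (∀ x y : EuclideanSpace ℝ (Fin d), ‖x‖ = ‖y‖ → g x = g y) →
      ContDiff ℝ 1 g → HasCompactSupport g →
      (∫ x, |g x| ^ γ) ^ (1 / γ) ≤
        C * sobolevSemi d s p g ^ (β₁ * p) * coulombEnergy d q α g ^ β₂ := by
  rintro ⟨C, hC0, hC⟩
  have : Nontrivial (EuclideanSpace ℝ (Fin d)) :=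
    Module.nontrivial_of_finrank_pos (R := ℝ) (by simp; omega)
  have hγ0 : 0 < γ := by linarith
  have hp0 : 0 < p := by linarith
  have hd1 : (0 : ℝ) < (d : ℝ) - 1 := by
    have : (2 : ℝ) ≤ d := by exact_mod_cast hd
    linarith
  have hgap : 0 < 1 / γ - β₁ - β₂ := by
    have h : β₁ + β₂ < 1 / γ := by rw [lt_div_iff₀ hγ0]; linarith
    linarith
  set δ := ((d : ℝ) - 1) * (1 / γ - β₁ - β₂) with hδ
  have hδ0 : 0 < δ := mul_pos hd1 hgap
  set ε := min (δ / (2 * β₂)) (α / 2)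
  have hε0 : 0 < ε := by positivity
  have hεα : ε ≤ α / 2 := min_le_right _ _
  have hεδ : ε * β₂ ≤ δ / 2 := by
    calc ε * β₂ ≤ δ / (2 * β₂) * β₂ := by gcongr; exact min_le_left _ _
      _ = δ / 2 := by field_simp
  obtain ⟨L, hL⟩ := exists_isShellCutoff (EuclideanSpace ℝ (Fin d))
  obtain ⟨A, hA0, hA⟩ := exists_sobolevSemi_le (by omega : 0 < d) L hs0 hs1 hp1
  obtain ⟨B, hB0, hB⟩ := exists_coulomb_le (volume : Measure (EuclideanSpace ℝ (Fin d))) L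
    (α := α) hq1 hε0.le (by linarith) (by linarith)
    (by rw [finrank_euclideanSpace_fin]; linarith)
  obtain ⟨V, hV0, hV⟩ := exists_measureReal_shell_le
    (volume : Measure (EuclideanSpace ℝ (Fin d)))
  obtain ⟨c, hc0, hc⟩ := exists_le_measureReal_inner_shell
    (volume : Measure (EuclideanSpace ℝ (Fin d)))
  rw [finrank_euclideanSpace_fin] at hB hV hc
  set n := (d : ℝ) - 1 with hn
  refine not_forall_rpow_le (κ := δ - ε * β₂)
    (M := C * (A * V) ^ β₁ * (B * V) ^ β₂ / c ^ (1 / γ)) (by linarith) fun R hR ↦ ?_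
  have hR0 : 0 < R := by linarith
  obtain ⟨g, hg⟩ := hL R hR
  have hsob : sobolevSemi d s p g ^ (β₁ * p) ≤ (A * V) ^ β₁ * R ^ (n * β₁) := by
    have h0 : 0 ≤ sobolevSemi d s p g := by
      unfold sobolevSemi
      split_ifs <;> positivity
    calc sobolevSemi d s p g ^ (β₁ * p) ≤ ((A * (V * R ^ n)) ^ (1 / p)) ^ (β₁ * p) := by
          gcongr
          refine (hA R hR g hg).trans ?_
          gcongr
          exact hV R hR
      _ = (A * V) ^ β₁ * R ^ (n * β₁) := by
          rw [← rpow_mul (by positivity), show 1 / p * (β₁ * p) = β₁ by field_simp, ← mul_assoc,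
            mul_rpow (by positivity) (by positivity), ← rpow_mul hR0.le]
  have hcou : coulombEnergy d q α g ^ β₂ ≤ (B * V) ^ β₂ * R ^ ((n + ε) * β₂) := by
    have h0 : 0 ≤ coulombEnergy d q α g :=
      integral_nonneg fun x ↦ integral_nonneg fun y ↦ by positivity
    calc coulombEnergy d q α g ^ β₂ ≤ (B * R ^ ε * (V * R ^ n)) ^ β₂ := by
          gcongr
          refine (hB R hR g hg).trans ?_
          gcongr
          exact hV R hR
      _ = (B * V * R ^ (n + ε)) ^ β₂ := by rw [rpow_add hR0]; ring_nf
      _ = (B * V) ^ β₂ * R ^ ((n + ε) * β₂) := by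
          rw [mul_rpow (by positivity) (by positivity), ← rpow_mul hR0.le]
  have hlow : c ^ (1 / γ) * R ^ (n * (1 / γ)) ≤ (∫ x, |g x| ^ γ) ^ (1 / γ) := by
    rw [rpow_mul hR0.le, ← mul_rpow hc0.le (by positivity)]
    gcongr
    exact (hc R hR).trans (hg.measureReal_le_integral volume hγ0)
  have hmain := hlow.trans (hC g hg.radial hg.contDiff hg.hasCompactSupport)
  have hub : C * sobolevSemi d s p g ^ (β₁ * p) * coulombEnergy d q α g ^ β₂ ≤
      C * ((A * V) ^ β₁ * R ^ (n * β₁)) * ((B * V) ^ β₂ * R ^ ((n + ε) * β₂)) := by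
    have h0 : 0 ≤ coulombEnergy d q α g :=
      integral_nonneg fun x ↦ integral_nonneg fun y ↦ by positivity
    gcongr
  have hexp : R ^ (n * (1 / γ)) = R ^ (δ - ε * β₂) * R ^ (n * β₁) * R ^ ((n + ε) * β₂) := by
    rw [← rpow_add hR0, ← rpow_add hR0, hδ]
    ring_nf
  rw [le_div_iff₀ (by positivity)]
  refine le_of_mul_le_mul_right ?_ (by positivity : 0 < R ^ (n * β₁) * R ^ ((n + ε) * β₂))
  calc _ = c ^ (1 / γ) * R ^ (n * (1 / γ)) := by rw [hexp]; ring
    _ ≤ _ := hmain.trans hub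
    _ = _ := by ring
end
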